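/- arXiv:1602.06372 — 3 statements merged into one kernel-verified Lean document; each statement's English description precedes it below -/
import Mathlib

section
/- Every convex quadrilateral in the Euclidean plane admits a periodic edge-to-edge monohedral tiling of the plane. -/
/-! The two diagonals of a convex quadrilateral `Q` cross at an interior point `O`. Let `p` and `q`
be the diagonal vectors, and use the affine coordinates `(x, y)` with origin `O` and basis `p, q`.
The vertices become `(-a, 0)`, `(1 - a, 0)`, `(0, -b)`, `(0, 1 - b)` with `0 < a, b < 1`, and
`Q = {φ_a x + φ_b y ≤ 1}`, where `φ_a` is the piecewise linear function with `φ_a 0 = 0` and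
`φ_a (-a) = φ_a (1 - a) = 1`.

The tiles are the translates of `Q` by the lattice `ℤ p + ℤ q`, together with the translates of the
half-turn of `Q` about the midpoint of an edge. Extending `φ_a` and `φ_b` from `[-a, 1 - a]` and
`[-b, 1 - b]` to `1`-periodic functions `f` and `g`, the translates of `Q` fill `{f x + g y ≤ 1}`
and the half-turned tiles fill `{f x + g y ≥ 1}`, so the tiles cover the plane. Two distinct
translates of `Q` meet at most in a vertex, since `Q` lies in a fundamental box of the lattice and
touches the boundary of that box only in its vertices. A half-turned tile meets `Q` only if it is
the half-turn of `Q` about the midpoint of one of its four edges, and then exactly in that edge. All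
other pairs of tiles reduce to these by an isometry that permutes the tiles. Disjointness of the
interiors follows, since a segment has empty interior.

The crossing of the diagonals comes from Radon's theorem: a Radon partition of the four vertices
has to be of type `2 + 2`, since no vertex lies in the convex hull of the others. -/

open EuclideanGeometry

noncomputable section

/-- The Euclidean plane. -/
abbrev Plane : Type := EuclideanSpace ℝ (Fin 2)

/-- Translate a subset of the plane by a vector. -/
def TranslateSet (v : Plane) (t : Set Plane) : Set Plane := (fun x => x + v) '' t

/-- `T` is a monohedral tiling of the plane by the prototile `P`: every tile is the
image of `P` under an isometry of the plane, the tiles cover the plane, and the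
interiors of distinct tiles are disjoint. -/
def IsMonohedralTiling (P : Set Plane) (T : Set (Set Plane)) : Prop :=
  (∀ t ∈ T, ∃ f : Plane ≃ᵢ Plane, t = f '' P) ∧
  (⋃₀ T = Set.univ) ∧
  T.Pairwise (fun s t => Disjoint (interior s) (interior t))

/-- `e` is an edge of the convex polygon `t`: a nondegenerate segment that is an
extreme subset (a face) of `t`. -/
def IsEdgeOf (e t : Set Plane) : Prop :=
  ∃ x y : Plane, x ≠ y ∧ e = segment ℝ x y ∧ IsExtreme ℝ t e

/-- A tiling is edge-to-edge if any two distinct tiles are disjoint, meet in exactly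
one common vertex of both, or meet in exactly one entire common edge of both. -/
def IsEdgeToEdge (T : Set (Set Plane)) : Prop :=
  ∀ s ∈ T, ∀ t ∈ T, s ≠ t →
    Disjoint s t ∨
    (∃ v : Plane, v ∈ Set.extremePoints ℝ s ∧ v ∈ Set.extremePoints ℝ t ∧ s ∩ t = {v}) ∨
    (∃ e : Set Plane, IsEdgeOf e s ∧ IsEdgeOf e t ∧ s ∩ t = e)

/-- A tiling is periodic if there are two linearly independent vectors such that
translation by each of them maps every tile onto a tile. -/
def IsPeriodicTiling (T : Set (Set Plane)) : Prop :=
  ∃ v w : Plane, LinearIndependent ℝ ![v, w] ∧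
    (∀ t ∈ T, TranslateSet v t ∈ T) ∧ (∀ t ∈ T, TranslateSet w t ∈ T)

/-- A convex polygon with exactly `n` vertices: a compact convex set with nonempty
interior having exactly `n` extreme points. -/
def IsConvexNGon (P : Set Plane) (n : ℕ) : Prop :=
  IsCompact P ∧ Convex ℝ P ∧ (interior P).Nonempty ∧ (Set.extremePoints ℝ P).ncard = n

/-! ### The one-dimensional gauge -/

/-- The gauge of the interval `[-a, 1 - a]`: the piecewise linear function that vanishes at `0` and
takes the value `1` at `-a` and at `1 - a`. -/
def gaugeFn (a x : ℝ) : ℝ := max (x / (1 - a)) (-x / a)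

section gauge

variable {a : ℝ}

theorem gaugeFn_nonneg (h0 : 0 < a) (h1 : a < 1) (x : ℝ) : 0 ≤ gaugeFn a x := by
  unfold gaugeFn
  rcases le_total 0 x with h | h
  · exact le_max_of_le_left (div_nonneg h (by linarith))
  · exact le_max_of_le_right (div_nonneg (by linarith) h0.le)

theorem gaugeFn_le_iff (h0 : 0 < a) (h1 : a < 1) (x r : ℝ) :
    gaugeFn a x ≤ r ↔ -(r * a) ≤ x ∧ x ≤ r * (1 - a) := by
  unfold gaugeFn
  rw [max_le_iff, div_le_iff₀ (by linarith), div_le_iff₀ h0]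
  constructor <;> rintro ⟨h, h'⟩ <;> constructor <;> linarith

theorem gaugeFn_convex (h0 : 0 < a) (h1 : a < 1) {s t : ℝ} (hs : 0 ≤ s) (ht : 0 ≤ t) (x y : ℝ) :
    gaugeFn a (s * x + t * y) ≤ s * gaugeFn a x + t * gaugeFn a y := by
  rw [gaugeFn_le_iff h0 h1]
  obtain ⟨h2, h3⟩ := (gaugeFn_le_iff h0 h1 x _).1 le_rfl
  obtain ⟨h4, h5⟩ := (gaugeFn_le_iff h0 h1 y _).1 le_rfl
  constructor <;> nlinarith [mul_le_mul_of_nonneg_left h2 hs, mul_le_mul_of_nonneg_left h3 hs,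
    mul_le_mul_of_nonneg_left h4 ht, mul_le_mul_of_nonneg_left h5 ht]

/-- The number `k - a` with `k ∈ {0, 1}` is an endpoint of `[-a, 1 - a]`, so the gauge is linear on
the ray it spans. -/
theorem gaugeFn_mul (h0 : 0 < a) (h1 : a < 1) {k : ℤ} (hk : k = 0 ∨ k = 1) {t : ℝ} (ht : 0 ≤ t) :
    gaugeFn a (t * (k - a)) = t := by
  have h2 : 0 < 1 - a := by linarith
  refine le_antisymm ?_ ?_
  · rw [gaugeFn_le_iff h0 h1]
    rcases hk with rfl | rfl <;> push_cast <;> constructor <;> nlinarith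
  · obtain ⟨h3, h4⟩ := (gaugeFn_le_iff h0 h1 (t * (k - a)) _).1 le_rfl
    rcases hk with rfl | rfl <;> push_cast at * <;> nlinarith

theorem exists_eq_gaugeFn_mul (h0 : 0 < a) (h1 : a < 1) (x : ℝ) :
    ∃ k : ℤ, (k = 0 ∨ k = 1) ∧ x = gaugeFn a x * (k - a) := by
  have h2 : 0 < 1 - a := by linarith
  rcases le_total 0 x with h | h
  · refine ⟨1, Or.inr rfl, ?_⟩
    have := gaugeFn_mul h0 h1 (k := 1) (Or.inr rfl) (div_nonneg h h2.le)
    push_cast at *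
    rw [div_mul_cancel₀ _ h2.ne'] at this
    rw [this, div_mul_cancel₀ _ h2.ne']
  · refine ⟨0, Or.inl rfl, ?_⟩
    have := gaugeFn_mul h0 h1 (k := 0) (Or.inl rfl) (div_nonneg (neg_nonneg.2 h) h0.le)
    have e : -x / a * (((0 : ℤ) : ℝ) - a) = x := by push_cast; field_simp; ring
    rw [e] at this
    rw [this, e]

/-- The linear function that agrees with the gauge on one ray is dominated by the gauge. -/
theorem div_le_gaugeFn {k : ℤ} (hk : k = 0 ∨ k = 1) (x : ℝ) :
    x / (k - a) ≤ gaugeFn a x := by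
  unfold gaugeFn
  rcases hk with rfl | rfl
  · refine le_max_of_le_right (le_of_eq ?_)
    push_cast
    rw [zero_sub, div_neg, neg_div]
  · exact le_max_of_le_left (by push_cast; exact le_rfl)

theorem eq_zero_of_gaugeFn_le (h0 : 0 < a) (h1 : a < 1) {x : ℝ} (h : gaugeFn a x ≤ 0) : x = 0 := by
  obtain ⟨h2, h3⟩ := (gaugeFn_le_iff h0 h1 x _).1 h
  linarith

theorem endpoint_ne_zero (h0 : 0 < a) (h1 : a < 1) {k : ℤ} (hk : k = 0 ∨ k = 1) :
    (k : ℝ) - a ≠ 0 := by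
  rcases hk with rfl | rfl <;> push_cast <;> intro h <;> linarith

theorem mem_box_of_gaugeFn (h0 : 0 < a) (h1 : a < 1) {x : ℝ} (h : gaugeFn a x ≤ 1) :
    -a ≤ x ∧ x ≤ 1 - a := by
  simpa using (gaugeFn_le_iff h0 h1 x _).1 h

end gauge

/-! ### Coordinates along the diagonals -/

/-- Affine coordinates adapted to a convex quadrilateral `Q`: the diagonals cross at `O`, they are
the vectors `p` and `q`, and `O` divides them in the ratios `a : 1 - a` and `b : 1 - b`. The
functions `X` and `Y` are the coordinates with origin `O` and basis `p, q`; the vertices of `Q` are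
the points `O + (k - a) p` and `O + (k - b) q` with `k ∈ {0, 1}`. -/
structure DiagonalFrame (Q : Set Plane) where
  (O p q : Plane)
  (a b : ℝ)
  (X Y : Plane → ℝ)
  a_pos : 0 < a
  a_lt : a < 1
  b_pos : 0 < b
  b_lt : b < 1
  indep : LinearIndependent ℝ ![p, q]
  coord : ∀ v, v = O + X v • p + Y v • q
  coord_X : ∀ x y : ℝ, X (O + x • p + y • q) = x
  coord_Y : ∀ x y : ℝ, Y (O + x • p + y • q) = y
  mem_iff : ∀ v, v ∈ Q ↔ gaugeFn a (X v) + gaugeFn b (Y v) ≤ 1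
  convex : Convex ℝ Q
  extreme_p : ∀ k : ℤ, k = 0 ∨ k = 1 → O + ((k : ℝ) - a) • p ∈ Set.extremePoints ℝ Q
  extreme_q : ∀ k : ℤ, k = 0 ∨ k = 1 → O + ((k : ℝ) - b) • q ∈ Set.extremePoints ℝ Q

/-- No vertex lies in the convex hull of the other three, so a Radon partition of the four vertices
consists of the endpoints of two crossing diagonals. -/
theorem exists_diagonals {Q : Set Plane} (hQ : IsConvexNGon Q 4) :
    ∃ A B C D : Plane, Set.extremePoints ℝ Q = {A, C, B, D} ∧ A ≠ C ∧ B ≠ D ∧ A ≠ B ∧ A ≠ D ∧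
      C ≠ B ∧ C ≠ D ∧ ∃ O, O ∈ segment ℝ A C ∧ O ∈ segment ℝ B D := by
  obtain ⟨-, hconv, -, hcard⟩ := hQ
  have hfin : (Set.extremePoints ℝ Q).Finite := Set.finite_of_ncard_pos (by omega)
  have hE : Nat.card (Set.extremePoints ℝ Q) = 4 := hcard
  have : Finite (Set.extremePoints ℝ Q) := hfin
  let e : Fin 4 ≃ Set.extremePoints ℝ Q := (Finite.equivFinOfCardEq hE).symm
  let f : Fin 4 → Plane := fun i => e i
  have hf : Function.Injective f := Subtype.val_injective.comp e.injective
  have hmem : ∀ i, f i ∈ Set.extremePoints ℝ Q := fun i => (e i).2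
  have hrange : Set.range f = Set.extremePoints ℝ Q := by
    ext v
    constructor
    · rintro ⟨i, rfl⟩
      exact hmem i
    · intro hv
      exact ⟨e.symm ⟨v, hv⟩, by simp [f]⟩
  have hindep := convexIndependent_set_iff_notMem_convexHull_sdiff.1
    hconv.convexIndependent_extremePoints
  have hdep : ¬ AffineIndependent ℝ f := by
    intro h
    have h1 := h.card_le_finrank_succ
    have h2 := Submodule.finrank_le (vectorSpan ℝ (Set.range f))
    simp at h1 h2
    omega
  obtain ⟨I, O, hO1, hO2⟩ := Convex.radon_partition hdep
  have key : ∀ J : Set (Fin 4), O ∈ convexHull ℝ (f '' J) → O ∈ convexHull ℝ (f '' Jᶜ) →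
      2 ≤ J.ncard := by
    intro J h1 h2
    by_contra hlt
    have hle : J.ncard ≤ 1 := by omega
    rcases (Set.ncard_le_one_iff_eq (Set.toFinite J)).1 hle with rfl | ⟨i, rfl⟩
    · simp at h1
    · have h3 : O = f i := by simpa using h1
      refine hindep (f i) (hmem i) (convexHull_mono ?_ (h3 ▸ h2))
      rintro _ ⟨j, hj, rfl⟩
      exact ⟨hmem j, fun h => hj (hf h)⟩
  have k1 := key I hO1 hO2
  have k2 := key Iᶜ hO2 (by rwa [compl_compl])
  have k3 := Set.ncard_add_ncard_compl I
  rw [Nat.card_eq_fintype_card, Fintype.card_fin] at k3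
  obtain ⟨i, j, hij, hI⟩ := Set.ncard_eq_two.1 (show I.ncard = 2 by omega)
  obtain ⟨k, l, hkl, hIc⟩ := Set.ncard_eq_two.1 (show Iᶜ.ncard = 2 by omega)
  have hne : ∀ x ∈ I, ∀ y ∈ Iᶜ, f x ≠ f y := fun x hx y hy h => hy (hf h ▸ hx)
  have hi : i ∈ I := by simp [hI]
  have hj : j ∈ I := by simp [hI]
  have hk : k ∈ Iᶜ := by simp [hIc]
  have hl : l ∈ Iᶜ := by simp [hIc]
  refine ⟨f i, f k, f j, f l, ?_, hf.ne hij, hf.ne hkl, hne i hi k hk, hne i hi l hl,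
    hne j hj k hk, hne j hj l hl, O, ?_, ?_⟩
  · rw [← hrange, ← Set.image_univ, ← Set.union_compl_self I, Set.image_union, hIc]
    rw [hI, Set.image_pair, Set.image_pair, Set.insert_union, Set.singleton_union]
  · rw [hI, Set.image_pair, convexHull_pair] at hO1
    exact hO1
  · rw [hIc, Set.image_pair, convexHull_pair] at hO2
    exact hO2

/-- If `Q` lies in `O + span {p, q}` and has interior points, this span is the whole plane. -/
theorem linearIndependent_of_span {Q : Set Plane} (hne : (interior Q).Nonempty) (O p q : Plane)
    (h : ∀ v ∈ Q, v - O ∈ Submodule.span ℝ (Set.range ![p, q])) :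
    LinearIndependent ℝ ![p, q] := by
  apply linearIndependent_of_top_le_span_of_card_eq_finrank
  · have htop : (Submodule.span ℝ (Set.range ![p, q])) = ⊤ := by
      apply Submodule.eq_top_of_nonempty_interior'
      obtain ⟨z, hz⟩ := hne
      refine ⟨z - O, ?_⟩
      rw [mem_interior]
      refine ⟨(fun v => v + O) ⁻¹' interior Q, ?_,
        isOpen_interior.preimage (by fun_prop), by simpa using hz⟩
      intro v hv
      simpa using h _ (interior_subset hv)
    exact htop.ge
  · simp

/-- The crossing point is interior to the diagonal `A C`: otherwise an extreme point would lie on the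
segment `B D`. -/
theorem exists_ratio {Q : Set Plane} {A C O B D : Plane} (hA : A ∈ Set.extremePoints ℝ Q)
    (hC : C ∈ Set.extremePoints ℝ Q) (hB : B ∈ Q) (hD : D ∈ Q) (hAB : A ≠ B) (hAD : A ≠ D)
    (hCB : C ≠ B) (hCD : C ≠ D) (hO : O ∈ segment ℝ A C) (hO' : O ∈ segment ℝ B D) :
    ∃ a : ℝ, 0 < a ∧ a < 1 ∧ A = O - a • (C - A) ∧ C = O + (1 - a) • (C - A) := by
  obtain ⟨s, t, hs, ht, hst, rfl⟩ := hO
  have hs' : s = 1 - t := by linarith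
  subst hs'
  refine ⟨t, lt_of_le_of_ne ht ?_, lt_of_le_of_ne (by linarith) ?_, by module, by module⟩
  · rintro rfl
    have h := (mem_extremePoints_iff_forall_segment.1 hA).2 B hB D hD (by simpa using hO')
    rcases h with h | h
    · exact hAB h.symm
    · exact hAD h.symm
  · rintro rfl
    have h := (mem_extremePoints_iff_forall_segment.1 hC).2 B hB D hD (by simpa using hO')
    rcases h with h | h
    · exact hCB h.symm
    · exact hCD h.symm

/-- The crossing point `O` of the diagonals, the diagonal vectors `p, q` and the ratios `a, b`. The
last clause says that `Q` is the convex hull of its vertices, written in terms of these data. -/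
theorem exists_crossing {Q : Set Plane} (hQ : IsConvexNGon Q 4) :
    ∃ (O p q : Plane) (a b : ℝ), 0 < a ∧ a < 1 ∧ 0 < b ∧ b < 1 ∧ O ∈ Q ∧
      (∀ k : ℤ, k = 0 ∨ k = 1 → O + ((k : ℝ) - a) • p ∈ Set.extremePoints ℝ Q) ∧
      (∀ k : ℤ, k = 0 ∨ k = 1 → O + ((k : ℝ) - b) • q ∈ Set.extremePoints ℝ Q) ∧
      ∀ S : Set Plane, Convex ℝ S → (∀ k : ℤ, k = 0 ∨ k = 1 → O + ((k : ℝ) - a) • p ∈ S) →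
        (∀ k : ℤ, k = 0 ∨ k = 1 → O + ((k : ℝ) - b) • q ∈ S) → Q ⊆ S := by
  obtain ⟨A, B, C, D, hE, hAC, hBD, hAB, hAD, hCB, hCD, O, hO1, hO2⟩ := exists_diagonals hQ
  obtain ⟨hcomp, hconv, hint, hcard⟩ := hQ
  have hA : A ∈ Set.extremePoints ℝ Q := by simp [hE]
  have hB : B ∈ Set.extremePoints ℝ Q := by simp [hE]
  have hC : C ∈ Set.extremePoints ℝ Q := by simp [hE]
  have hD : D ∈ Set.extremePoints ℝ Q := by simp [hE]
  obtain ⟨a, ha0, ha1, hAa, hCa⟩ :=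
    exists_ratio hA hC hB.1 hD.1 hAB hAD hCB hCD hO1 hO2
  obtain ⟨b, hb0, hb1, hBb, hDb⟩ :=
    exists_ratio hB hD hA.1 hC.1 hAB.symm hCB.symm hAD.symm hCD.symm hO2 hO1
  have hOQ : O ∈ Q := hconv.segment_subset hA.1 hC.1 hO1
  have hull : Q = convexHull ℝ {A, C, B, D} := by
    rw [← hE]
    have hfin : (Set.extremePoints ℝ Q).Finite := Set.finite_of_ncard_pos (by omega)
    rw [← (hfin.isClosed_convexHull ℝ).closure_eq]
    exact (closure_convexHull_extremePoints hcomp hconv).symm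
  generalize C - A = p at *
  generalize D - B = q at *
  have eA : O + (((0 : ℤ) : ℝ) - a) • p = A := by rw [hAa]; push_cast; module
  have eC : O + (((1 : ℤ) : ℝ) - a) • p = C := by rw [hCa]; push_cast; module
  have eB : O + (((0 : ℤ) : ℝ) - b) • q = B := by rw [hBb]; push_cast; module
  have eD : O + (((1 : ℤ) : ℝ) - b) • q = D := by rw [hDb]; push_cast; module
  refine ⟨O, p, q, a, b, ha0, ha1, hb0, hb1, hOQ, ?_, ?_, ?_⟩
  · rintro k (rfl | rfl)
    · rwa [eA]
    · rwa [eC]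
  · rintro k (rfl | rfl)
    · rwa [eB]
    · rwa [eD]
  · intro S hS hp hq
    rw [hull]
    refine convexHull_min ?_ hS
    rintro v (rfl | rfl | rfl | rfl)
    · exact eA ▸ hp 0 (Or.inl rfl)
    · exact eC ▸ hp 1 (Or.inr rfl)
    · exact eB ▸ hq 0 (Or.inl rfl)
    · exact eD ▸ hq 1 (Or.inr rfl)

theorem exists_coordinates (O : Plane) {p q : Plane} (hli : LinearIndependent ℝ ![p, q]) :
    ∃ X Y : Plane → ℝ, (∀ v, v = O + X v • p + Y v • q) ∧
      (∀ x y : ℝ, X (O + x • p + y • q) = x) ∧ (∀ x y : ℝ, Y (O + x • p + y • q) = y) := by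
  let β : Module.Basis (Fin 2) ℝ Plane := basisOfLinearIndependentOfCardEqFinrank hli (by simp)
  have hβ : ⇑β = ![p, q] := coe_basisOfLinearIndependentOfCardEqFinrank hli (by simp)
  have hβ0 : β 0 = p := by rw [hβ]; rfl
  have hβ1 : β 1 = q := by rw [hβ]; rfl
  refine ⟨fun v => β.repr (v - O) 0, fun v => β.repr (v - O) 1, ?_, ?_, ?_⟩
  · intro v
    have := β.sum_repr (v - O)
    rw [Fin.sum_univ_two, hβ0, hβ1] at this
    rw [add_assoc, this]
    abel
  · intro x y
    have e : O + x • p + y • q - O = x • β 0 + y • β 1 := by rw [hβ0, hβ1]; abel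
    simp only [e]
    simp
  · intro x y
    have e : O + x • p + y • q - O = x • β 0 + y • β 1 := by rw [hβ0, hβ1]; abel
    simp only [e]
    simp

theorem exists_diagonalFrame {Q : Set Plane} (hQ : IsConvexNGon Q 4) :
    Nonempty (DiagonalFrame Q) := by
  obtain ⟨O, p, q, a, b, ha0, ha1, hb0, hb1, hOQ, hpk, hqk, hull⟩ := exists_crossing hQ
  obtain ⟨-, hconv, hint, -⟩ := hQ
  have hpS : p ∈ Submodule.span ℝ (Set.range ![p, q]) := Submodule.subset_span ⟨0, rfl⟩
  have hqS : q ∈ Submodule.span ℝ (Set.range ![p, q]) := Submodule.subset_span ⟨1, rfl⟩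
  have hli : LinearIndependent ℝ ![p, q] := by
    refine linearIndependent_of_span hint O p q ?_
    refine hull {v | v - O ∈ Submodule.span ℝ (Set.range ![p, q])} ?_ ?_ ?_
    · intro x hx y hy s t hs ht hst
      have e : s • x + t • y - O = s • (x - O) + t • (y - O) := by
        have : t = 1 - s := by linarith
        subst this
        module
      show s • x + t • y - O ∈ Submodule.span ℝ (Set.range ![p, q])
      rw [e]
      exact Submodule.add_mem _ (Submodule.smul_mem _ _ hx) (Submodule.smul_mem _ _ hy)
    · intro k _
      rw [Set.mem_ofPred_eq, add_sub_cancel_left]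
      exact Submodule.smul_mem _ _ hpS
    · intro k _
      rw [Set.mem_ofPred_eq, add_sub_cancel_left]
      exact Submodule.smul_mem _ _ hqS
  obtain ⟨X, Y, hcoord, hX, hY⟩ := exists_coordinates O hli
  refine ⟨⟨O, p, q, a, b, X, Y, ha0, ha1, hb0, hb1, hli, hcoord, hX, hY, ?_, hconv, hpk, hqk⟩⟩
  intro v
  constructor
  · have h0a := gaugeFn_mul ha0 ha1 (k := 0) (Or.inl rfl) (t := 0) le_rfl
    have h0b := gaugeFn_mul hb0 hb1 (k := 0) (Or.inl rfl) (t := 0) le_rfl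
    rw [zero_mul] at h0a h0b
    refine fun hv => hull {v | gaugeFn a (X v) + gaugeFn b (Y v) ≤ 1} ?_ ?_ ?_ hv
    · intro x hx y hy s t hs ht hst
      have e : s • x + t • y = O + (s * X x + t * X y) • p + (s * Y x + t * Y y) • q := by
        have : t = 1 - s := by linarith
        subst this
        nth_rewrite 1 [hcoord x]
        nth_rewrite 1 [hcoord y]
        module
      show gaugeFn a (X (s • x + t • y)) + gaugeFn b (Y (s • x + t • y)) ≤ 1
      rw [e, hX, hY]
      have h1 := gaugeFn_convex ha0 ha1 hs ht (X x) (X y)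
      have h2 := gaugeFn_convex hb0 hb1 hs ht (Y x) (Y y)
      have h3 := mul_le_mul_of_nonneg_left (show _ ≤ _ from hx) hs
      have h4 := mul_le_mul_of_nonneg_left (show _ ≤ _ from hy) ht
      linarith
    · intro k hk
      have e : O + ((k : ℝ) - a) • p = O + ((k : ℝ) - a) • p + (0 : ℝ) • q := by module
      have := gaugeFn_mul ha0 ha1 hk (zero_le_one)
      rw [one_mul] at this
      rw [Set.mem_ofPred_eq, e, hX, hY, h0b, this, add_zero]
    · intro k hk
      have e : O + ((k : ℝ) - b) • q = O + (0 : ℝ) • p + ((k : ℝ) - b) • q := by module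
      have := gaugeFn_mul hb0 hb1 hk (zero_le_one)
      rw [one_mul] at this
      rw [Set.mem_ofPred_eq, e, hX, hY, h0a, this, zero_add]
  · intro hv
    -- The point is a convex combination of `O` and the two vertices bounding its quadrant.
    obtain ⟨k, hk, hx⟩ := exists_eq_gaugeFn_mul ha0 ha1 (X v)
    obtain ⟨l, hl, hy⟩ := exists_eq_gaugeFn_mul hb0 hb1 (Y v)
    have hs := gaugeFn_nonneg ha0 ha1 (X v)
    have ht := gaugeFn_nonneg hb0 hb1 (Y v)
    generalize gaugeFn a (X v) = s at *
    generalize gaugeFn b (Y v) = t at *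
    have e : v = (1 - s - t) • O + s • (O + ((k : ℝ) - a) • p) + t • (O + ((l : ℝ) - b) • q) := by
      rw [hcoord v, hx, hy]
      module
    rw [e]
    have hmem := hconv.sum_mem (t := Finset.univ) (w := ![1 - s - t, s, t])
      (z := ![O, O + ((k : ℝ) - a) • p, O + ((l : ℝ) - b) • q])
      (by intro i _; fin_cases i <;> simp <;> linarith)
      (by simp [Fin.sum_univ_three]; ring)
      (by intro i _; fin_cases i; exacts [hOQ, (hpk k hk).1, (hqk l hl).1])
    rw [Fin.sum_univ_three] at hmem
    exact hmem

/-! ### Tiles in proper position -/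

/-- The alternative that an edge-to-edge tiling demands of two distinct tiles. -/
def MeetsProperly (s t : Set Plane) : Prop :=
  Disjoint s t ∨
    (∃ v : Plane, v ∈ Set.extremePoints ℝ s ∧ v ∈ Set.extremePoints ℝ t ∧ s ∩ t = {v}) ∨
    (∃ e : Set Plane, IsEdgeOf e s ∧ IsEdgeOf e t ∧ s ∩ t = e)

theorem MeetsProperly.symm {s t : Set Plane} (h : MeetsProperly s t) : MeetsProperly t s := by
  rcases h with h | ⟨v, h1, h2, h3⟩ | ⟨e, h1, h2, h3⟩
  · exact Or.inl h.symm
  · exact Or.inr (Or.inl ⟨v, h2, h1, by rw [Set.inter_comm, h3]⟩)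
  · exact Or.inr (Or.inr ⟨e, h2, h1, by rw [Set.inter_comm, h3]⟩)

theorem isExtreme_image (f : Plane ≃ᵃⁱ[ℝ] Plane) {s e : Set Plane} (h : IsExtreme ℝ s e) :
    IsExtreme ℝ (f '' s) (f '' e) := by
  refine ⟨Set.image_mono h.subset, ?_⟩
  rintro _ ⟨x, hx, rfl⟩ _ ⟨y, hy, rfl⟩ _ ⟨z, hz, rfl⟩ hzxy
  have himg : f '' openSegment ℝ x y = openSegment ℝ (f x) (f y) :=
    image_openSegment ℝ f.toAffineEquiv.toAffineMap x y
  rw [← himg, f.injective.mem_set_image] at hzxy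
  exact ⟨x, h.left_mem_of_mem_openSegment hx hy hz hzxy, rfl⟩

theorem mem_extremePoints_image (f : Plane ≃ᵃⁱ[ℝ] Plane) {s : Set Plane} {v : Plane}
    (h : v ∈ Set.extremePoints ℝ s) : f v ∈ Set.extremePoints ℝ (f '' s) := by
  rw [← isExtreme_singleton] at h ⊢
  simpa using isExtreme_image f h

theorem isEdgeOf_image (f : Plane ≃ᵃⁱ[ℝ] Plane) {s e : Set Plane} (h : IsEdgeOf e s) :
    IsEdgeOf (f '' e) (f '' s) := by
  obtain ⟨x, y, hxy, rfl, h⟩ := h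
  refine ⟨f x, f y, f.injective.ne hxy, ?_, isExtreme_image f h⟩
  exact image_segment ℝ f.toAffineEquiv.toAffineMap x y

theorem MeetsProperly.image (f : Plane ≃ᵃⁱ[ℝ] Plane) {s t : Set Plane} (h : MeetsProperly s t) :
    MeetsProperly (f '' s) (f '' t) := by
  rcases h with h | ⟨v, h1, h2, h3⟩ | ⟨e, h1, h2, h3⟩
  · exact Or.inl ((Set.disjoint_image_iff f.injective).2 h)
  · refine Or.inr (Or.inl ⟨f v, mem_extremePoints_image f h1, mem_extremePoints_image f h2, ?_⟩)
    rw [← Set.image_inter f.injective, h3, Set.image_singleton]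
  · refine Or.inr (Or.inr ⟨f '' e, isEdgeOf_image f h1, isEdgeOf_image f h2, ?_⟩)
    rw [← Set.image_inter f.injective, h3]

theorem interior_segment_eq_empty (x y : Plane) : interior (segment ℝ x y) = ∅ := by
  by_contra hne
  rw [← ne_eq, ← Set.nonempty_iff_ne_empty,
    (convex_segment x y).interior_nonempty_iff_affineSpan_eq_top, ← convexHull_pair,
    affineSpan_convexHull] at hne
  have h1 := (collinear_iff_finrank_le_one (k := ℝ) (s := {x, y})).1 (collinear_pair ℝ x y)
  rw [← direction_affineSpan, hne, AffineSubspace.direction_top] at h1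
  simp at h1

theorem MeetsProperly.disjoint_interior {s t : Set Plane} (h : MeetsProperly s t) :
    Disjoint (interior s) (interior t) := by
  rw [Set.disjoint_iff_inter_eq_empty, ← interior_inter]
  rcases h with h | ⟨v, -, -, h⟩ | ⟨e, ⟨x, y, -, rfl, -⟩, -, h⟩
  · rw [h.inter_eq, interior_empty]
  · rw [h, ← segment_same ℝ v, interior_segment_eq_empty]
  · rw [h, interior_segment_eq_empty]

/-! ### Translations and half-turns -/

/-- The translation `v ↦ w + v`. -/
def translation (w : Plane) : Plane ≃ᵃⁱ[ℝ] Plane := AffineIsometryEquiv.constVAdd ℝ Plane w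

/-- The half-turn `v ↦ u - v`, with centre `u / 2`. -/
def halfTurn (u : Plane) : Plane ≃ᵃⁱ[ℝ] Plane := AffineIsometryEquiv.constVSub ℝ u

@[simp] theorem translation_apply (w v : Plane) : translation w v = w + v := rfl

@[simp] theorem halfTurn_apply (u v : Plane) : halfTurn u v = u - v := rfl

theorem mem_translation_image {w v : Plane} {s : Set Plane} :
    v ∈ translation w '' s ↔ v - w ∈ s := by
  constructor
  · rintro ⟨z, hz, rfl⟩
    simpa using hz
  · intro h
    exact ⟨v - w, h, by simp⟩

theorem mem_halfTurn_image {u v : Plane} {s : Set Plane} :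
    v ∈ halfTurn u '' s ↔ u - v ∈ s := by
  constructor
  · rintro ⟨z, hz, rfl⟩
    simpa using hz
  · intro h
    exact ⟨u - v, h, by simp⟩

/-! ### The tiling -/

namespace DiagonalFrame

variable {Q : Set Plane} (F : DiagonalFrame Q)

/-- The lattice vector `m p + n q`. -/
def lat (m n : ℤ) : Plane := (m : ℝ) • F.p + (n : ℝ) • F.q

/-- The sum of the vertices `O - a p` and `O - b q`; the half-turn `v ↦ c - v` has the midpoint of
the edge joining them as its centre. -/
def c : Plane := (F.O - F.a • F.p) + (F.O - F.b • F.q)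

/-- The lattice translates of `Q` and of its half-turn about the midpoint of an edge. -/
def tiling : Set (Set Plane) :=
  {t | ∃ m n : ℤ, t = translation (F.lat m n) '' Q ∨ t = halfTurn (F.c + F.lat m n) '' Q}

theorem mem_Q {v : Plane} {x y : ℝ} (h : v = F.O + x • F.p + y • F.q) :
    v ∈ Q ↔ gaugeFn F.a x + gaugeFn F.b y ≤ 1 := by
  rw [F.mem_iff, h, F.coord_X, F.coord_Y]

theorem mem_translate (m n : ℤ) (v : Plane) : v ∈ translation (F.lat m n) '' Q ↔
    gaugeFn F.a (F.X v - m) + gaugeFn F.b (F.Y v - n) ≤ 1 := by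
  rw [mem_translation_image]
  apply F.mem_Q
  nth_rewrite 1 [F.coord v]
  unfold lat
  module

theorem mem_turn (m n : ℤ) (v : Plane) : v ∈ halfTurn (F.c + F.lat m n) '' Q ↔
    gaugeFn F.a (m - F.a - F.X v) + gaugeFn F.b (n - F.b - F.Y v) ≤ 1 := by
  rw [mem_halfTurn_image]
  apply F.mem_Q
  nth_rewrite 1 [F.coord v]
  unfold lat c
  module

theorem box {x y : ℝ} (h : gaugeFn F.a x + gaugeFn F.b y ≤ 1) :
    (-F.a ≤ x ∧ x ≤ 1 - F.a) ∧ (-F.b ≤ y ∧ y ≤ 1 - F.b) := by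
  have h1 := gaugeFn_nonneg F.a_pos F.a_lt x
  have h2 := gaugeFn_nonneg F.b_pos F.b_lt y
  exact ⟨mem_box_of_gaugeFn F.a_pos F.a_lt (by linarith),
    mem_box_of_gaugeFn F.b_pos F.b_lt (by linarith)⟩

/-- With `x = X v - m = s (k - a)` and `y = Y v - n = t (l - b)`, the tile containing `v` is the
translate of `Q` by `m p + n q` if `s + t ≤ 1`, and otherwise the half-turned tile across the edge
`(k, l)` of that translate. -/
theorem cover : ⋃₀ F.tiling = Set.univ := by
  rw [Set.eq_univ_iff_forall]
  intro v
  have key : ∀ {a : ℝ}, 0 < a → a < 1 → ∀ x : ℝ, ∃ (m k : ℤ) (s : ℝ), (k = 0 ∨ k = 1) ∧ s ≤ 1 ∧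
      gaugeFn a (x - m) = s ∧ x - m = s * (k - a) := by
    intro a h0 h1 x
    obtain ⟨k, hk, hx⟩ := exists_eq_gaugeFn_mul h0 h1 (x - ⌊x + a⌋)
    refine ⟨⌊x + a⌋, k, _, hk, ?_, rfl, hx⟩
    rw [gaugeFn_le_iff h0 h1]
    have h2 := Int.floor_le (x + a)
    have h3 := Int.lt_floor_add_one (x + a)
    constructor <;> linarith
  obtain ⟨m, k, s, hk, hs, hs1, hs2⟩ := key F.a_pos F.a_lt (F.X v)
  obtain ⟨n, l, t, hl, ht, ht1, ht2⟩ := key F.b_pos F.b_lt (F.Y v)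
  by_cases h : s + t ≤ 1
  · refine ⟨_, ⟨m, n, Or.inl rfl⟩, ?_⟩
    rwa [F.mem_translate, hs1, ht1]
  · refine ⟨_, ⟨m + k, n + l, Or.inr rfl⟩, ?_⟩
    rw [F.mem_turn]
    have e1 : ((m + k : ℤ) : ℝ) - F.a - F.X v = (1 - s) * (k - F.a) := by
      push_cast; linear_combination -hs2
    have e2 : ((n + l : ℤ) : ℝ) - F.b - F.Y v = (1 - t) * (l - F.b) := by
      push_cast; linear_combination -ht2
    rw [e1, e2, gaugeFn_mul F.a_pos F.a_lt hk (by linarith),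
      gaugeFn_mul F.b_pos F.b_lt hl (by linarith)]
    linarith

/-- The edge of `Q` joining the vertices `O + (k - a) p` and `O + (l - b) q` is cut out by the
supporting function `x / (k - a) + y / (l - b) ≤ 1`. -/
theorem isEdgeOf {k l : ℤ} (hk : k = 0 ∨ k = 1) (hl : l = 0 ∨ l = 1) :
    IsEdgeOf (segment ℝ (F.O + ((k : ℝ) - F.a) • F.p) (F.O + ((l : ℝ) - F.b) • F.q)) Q := by
  have hα := endpoint_ne_zero F.a_pos F.a_lt hk
  have hβ := endpoint_ne_zero F.b_pos F.b_lt hl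
  have hle := fun x => div_le_gaugeFn (a := F.a) hk x
  have hle' := fun x => div_le_gaugeFn (a := F.b) hl x
  have hP := (F.extreme_p k hk).1
  have hR := (F.extreme_q l hl).1
  generalize hαd : (k : ℝ) - F.a = α at *
  generalize hβd : (l : ℝ) - F.b = β at *
  have hseg : ∀ v, v ∈ segment ℝ (F.O + α • F.p) (F.O + β • F.q) ↔
      v ∈ Q ∧ F.X v / α + F.Y v / β = 1 := by
    intro v
    constructor
    · intro hv
      refine ⟨F.convex.segment_subset hP hR hv, ?_⟩
      obtain ⟨s, t, hs, ht, hst, rfl⟩ := hv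
      have e : s • (F.O + α • F.p) + t • (F.O + β • F.q) =
          F.O + (s * α) • F.p + (t * β) • F.q := by
        have : t = 1 - s := by linarith
        subst this
        module
      rw [e, F.coord_X, F.coord_Y, mul_div_cancel_right₀ _ hα, mul_div_cancel_right₀ _ hβ, hst]
    · rintro ⟨hv, h1⟩
      rw [F.mem_iff] at hv
      have h2 := hle (F.X v)
      have h3 := hle' (F.Y v)
      have h4 := gaugeFn_nonneg F.a_pos F.a_lt (F.X v)
      have h5 := gaugeFn_nonneg F.b_pos F.b_lt (F.Y v)
      refine ⟨F.X v / α, F.Y v / β, by linarith, by linarith, h1, ?_⟩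
      nth_rewrite 3 [F.coord v]
      have e1 : F.X v / α * α = F.X v := div_mul_cancel₀ _ hα
      have e2 : F.Y v / β * β = F.Y v := div_mul_cancel₀ _ hβ
      rw [smul_add, smul_add, smul_smul, smul_smul, e1, e2]
      have : F.Y v / β = 1 - F.X v / α := by linarith
      rw [this]
      module
  refine ⟨_, _, ?_, rfl, ?_, ?_⟩
  · intro h
    have h1 := F.coord_X α 0
    have h2 := F.coord_X 0 β
    rw [zero_smul, add_zero] at h1 h2
    exact hα (by rw [← h1, h, h2])
  · intro v hv
    exact ((hseg v).1 hv).1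
  · intro x hx y hy z hz hzxy
    refine (hseg x).2 ⟨hx, ?_⟩
    have hz' := ((hseg z).1 hz).2
    obtain ⟨s, t, hs, ht, hst, rfl⟩ := hzxy
    have e : s • x + t • y =
        F.O + (s * F.X x + t * F.X y) • F.p + (s * F.Y x + t * F.Y y) • F.q := by
      have : t = 1 - s := by linarith
      subst this
      nth_rewrite 1 [F.coord x]
      nth_rewrite 1 [F.coord y]
      module
    rw [e, F.coord_X, F.coord_Y] at hz'
    rw [F.mem_iff] at hx hy
    have hx1 : F.X x / α + F.Y x / β ≤ 1 := by linarith [hle (F.X x), hle' (F.Y x)]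
    have hy1 : F.X y / α + F.Y y / β ≤ 1 := by linarith [hle (F.X y), hle' (F.Y y)]
    have hsum : s * (F.X x / α + F.Y x / β) + t * (F.X y / α + F.Y y / β) = 1 := by
      rw [← hz']; ring
    have hy2 := mul_le_mul_of_nonneg_left hy1 ht.le
    by_contra hne
    have hx2 := mul_lt_mul_of_pos_left (lt_of_le_of_ne hx1 hne) hs
    linarith

/-- If `Q` meets a half-turned tile, that tile is the half-turn of `Q` about the midpoint of one of
its edges, and the intersection is that edge. -/
theorem meetsProperly_turn (m n : ℤ) : MeetsProperly Q (halfTurn (F.c + F.lat m n) '' Q) := by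
  by_cases hdis : Disjoint Q (halfTurn (F.c + F.lat m n) '' Q)
  · exact Or.inl hdis
  have ha0 := F.a_pos
  have ha1 := F.a_lt
  have hb0 := F.b_pos
  have hb1 := F.b_lt
  obtain ⟨z, hz1, hz2⟩ := Set.not_disjoint_iff.1 hdis
  rw [F.mem_iff] at hz1
  rw [F.mem_turn] at hz2
  have bit : ∀ {a x : ℝ} {m : ℤ}, 0 < a → a < 1 → -a ≤ x ∧ x ≤ 1 - a →
      -a ≤ m - a - x ∧ m - a - x ≤ 1 - a → m = 0 ∨ m = 1 := by
    rintro a x m h0 h1 ⟨h2, h3⟩ ⟨h4, h5⟩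
    have h6 : ((-1 : ℤ) : ℝ) < m := by push_cast; linarith
    have h7 : (m : ℝ) < ((2 : ℤ) : ℝ) := by push_cast; linarith
    rw [Int.cast_lt] at h6 h7
    omega
  obtain ⟨hb1x, hb1y⟩ := F.box hz1
  obtain ⟨hb2x, hb2y⟩ := F.box hz2
  have hm := bit ha0 ha1 hb1x hb2x
  have hn := bit hb0 hb1 hb1y hb2y
  refine Or.inr (Or.inr ⟨_, F.isEdgeOf hm hn, ?_, ?_⟩)
  · -- The half-turn exchanges the endpoints of the edge.
    have h := isEdgeOf_image (halfTurn (F.c + F.lat m n)) (F.isEdgeOf hm hn)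
    have himg : halfTurn (F.c + F.lat m n) ''
        segment ℝ (F.O + ((m : ℝ) - F.a) • F.p) (F.O + ((n : ℝ) - F.b) • F.q) =
        segment ℝ (F.O + ((m : ℝ) - F.a) • F.p) (F.O + ((n : ℝ) - F.b) • F.q) := by
      refine (image_segment ℝ
        (halfTurn (F.c + F.lat m n)).toAffineEquiv.toAffineMap _ _).trans ?_
      rw [segment_symm]
      congr 1
      · show F.c + F.lat m n - _ = _
        unfold c lat
        module
      · show F.c + F.lat m n - _ = _
        unfold c lat
        module
    rwa [himg] at h
  · apply Set.Subset.antisymm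
    · rintro v ⟨hv1, hv2⟩
      rw [F.mem_iff] at hv1
      rw [F.mem_turn] at hv2
      -- Both tiles confine `x` to the interval between `0` and `m - a`.
      have part : ∀ {a x : ℝ} {m : ℤ}, 0 < a → a < 1 → (m = 0 ∨ m = 1) → -a ≤ x ∧ x ≤ 1 - a →
          -a ≤ m - a - x ∧ m - a - x ≤ 1 - a →
          ∃ t : ℝ, 0 ≤ t ∧ t ≤ 1 ∧ x = t * (m - a) := by
        rintro a x m h0 h1 hm ⟨h2, h3⟩ ⟨h4, h5⟩
        rcases hm with rfl | rfl
        · refine ⟨-x / a, ?_, ?_, ?_⟩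
          · push_cast at h4
            exact div_nonneg (by linarith) h0.le
          · rw [div_le_one h0]; linarith
          · push_cast; field_simp; ring
        · have h6 : 0 < 1 - a := by linarith
          refine ⟨x / (1 - a), ?_, ?_, ?_⟩
          · push_cast at h5
            exact div_nonneg (by linarith) h6.le
          · rw [div_le_one h6]; linarith
          · push_cast; field_simp
      obtain ⟨hv1x, hv1y⟩ := F.box hv1
      obtain ⟨hv2x, hv2y⟩ := F.box hv2
      obtain ⟨t, ht0, ht1, htx⟩ := part ha0 ha1 hm hv1x hv2x
      obtain ⟨s, hs0, hs1, hsy⟩ := part hb0 hb1 hn hv1y hv2y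
      have e1 : (m : ℝ) - F.a - F.X v = (1 - t) * (m - F.a) := by rw [htx]; ring
      have e2 : (n : ℝ) - F.b - F.Y v = (1 - s) * (n - F.b) := by rw [hsy]; ring
      rw [htx, hsy, gaugeFn_mul ha0 ha1 hm ht0, gaugeFn_mul hb0 hb1 hn hs0] at hv1
      rw [e1, e2, gaugeFn_mul ha0 ha1 hm (by linarith),
        gaugeFn_mul hb0 hb1 hn (by linarith)] at hv2
      have hts : t + s = 1 := by linarith
      refine ⟨t, s, ht0, hs0, hts, ?_⟩
      rw [F.coord v, htx, hsy]
      have : s = 1 - t := by linarith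
      rw [this]
      module
    · have hP := (F.extreme_p m hm).1
      have hR := (F.extreme_q n hn).1
      intro v hv
      refine ⟨F.convex.segment_subset hP hR hv, ?_⟩
      rw [mem_halfTurn_image]
      refine F.convex.segment_subset hR hP ?_
      obtain ⟨s, t, hs, ht, hst, rfl⟩ := hv
      refine ⟨s, t, hs, ht, hst, ?_⟩
      have : t = 1 - s := by linarith
      subst this
      unfold c lat
      module

/-- Two distinct translates of `Q` meet at most in a common vertex. -/
theorem meetsProperly_translate (m n : ℤ) (hmn : ¬ (m = 0 ∧ n = 0)) :
    MeetsProperly Q (translation (F.lat m n) '' Q) := by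
  by_cases hdis : Disjoint Q (translation (F.lat m n) '' Q)
  · exact Or.inl hdis
  have ha0 := F.a_pos
  have ha1 := F.a_lt
  have hb0 := F.b_pos
  have hb1 := F.b_lt
  -- If the shift `m` along one diagonal is nonzero, a common point has its coordinate at an end of
  -- `[-a, 1 - a]`, determined by the sign of `m`; there the gauge takes the value `1`.
  have ends : ∀ {a x : ℝ} {m : ℤ}, 0 < a → a < 1 → m ≠ 0 → -a ≤ x ∧ x ≤ 1 - a →
      -a ≤ x - m ∧ x - m ≤ 1 - a →
      ∃ k k' : ℤ, (k = 0 ∨ k = 1) ∧ (k' = 0 ∨ k' = 1) ∧ k - k' = m ∧ k = (if 0 < m then 1 else 0) ∧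
        x = k - a := by
    rintro a x m h0 h1 hm ⟨h2, h3⟩ ⟨h4, h5⟩
    have h6 : ((-2 : ℤ) : ℝ) < m := by push_cast; linarith
    have h7 : (m : ℝ) < ((2 : ℤ) : ℝ) := by push_cast; linarith
    rw [Int.cast_lt] at h6 h7
    obtain rfl | rfl : m = 1 ∨ m = -1 := by omega
    · refine ⟨1, 0, by simp, by simp, by simp, by simp, ?_⟩
      push_cast at *
      linarith
    · refine ⟨0, 1, by simp, by simp, by simp, by simp, ?_⟩
      push_cast at *
      linarith
  have one : ∀ {a : ℝ} {k : ℤ}, 0 < a → a < 1 → (k = 0 ∨ k = 1) → gaugeFn a (k - a) = 1 := by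
    intro a k h0 h1 hk
    have := gaugeFn_mul h0 h1 hk zero_le_one
    rwa [one_mul] at this
  obtain ⟨z, hz1, hz2⟩ := Set.not_disjoint_iff.1 hdis
  rw [F.mem_iff] at hz1
  rw [F.mem_translate] at hz2
  obtain ⟨hb1x, hb1y⟩ := F.box hz1
  obtain ⟨hb2x, hb2y⟩ := F.box hz2
  by_cases hm : m = 0
  · have hn : n ≠ 0 := fun h => hmn ⟨hm, h⟩
    obtain ⟨k, k', hk, hk', hkk, hkif, -⟩ := ends hb0 hb1 hn hb1y hb2y
    subst hm
    refine Or.inr (Or.inl ⟨F.O + ((k : ℝ) - F.b) • F.q, F.extreme_q k hk, ?_, ?_⟩)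
    · have h := mem_extremePoints_image (translation (F.lat 0 n)) (F.extreme_q k' hk')
      convert h using 1
      rw [translation_apply, ← hkk]
      unfold lat
      push_cast
      module
    · apply Set.Subset.antisymm
      · rintro v ⟨hv1, hv2⟩
        rw [F.mem_iff] at hv1
        rw [F.mem_translate] at hv2
        obtain ⟨-, hv1y⟩ := F.box hv1
        obtain ⟨-, hv2y⟩ := F.box hv2
        obtain ⟨j, -, hj, -, -, hjif, hy⟩ := ends hb0 hb1 hn hv1y hv2y
        obtain rfl : j = k := by rw [hjif, hkif]
        rw [hy, one hb0 hb1 hj] at hv1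
        have hx : F.X v = 0 := eq_zero_of_gaugeFn_le ha0 ha1 (by linarith)
        rw [Set.mem_singleton_iff, F.coord v, hx, hy]
        module
      · rw [Set.singleton_subset_iff]
        refine ⟨(F.extreme_q k hk).1, ?_⟩
        rw [mem_translation_image]
        convert (F.extreme_q k' hk').1 using 1
        rw [← hkk]
        unfold lat
        push_cast
        module
  · obtain ⟨k, k', hk, hk', hkk, hkif, hx⟩ := ends ha0 ha1 hm hb1x hb2x
    have hn : n = 0 := by
      have hx' : F.X z - m = (k' : ℝ) - F.a := by
        rw [hx, ← hkk]; push_cast; ring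
      rw [hx, one ha0 ha1 hk] at hz1
      rw [hx', one ha0 ha1 hk'] at hz2
      have h1 : F.Y z = 0 := eq_zero_of_gaugeFn_le hb0 hb1 (by linarith)
      have h2 : F.Y z - n = 0 := eq_zero_of_gaugeFn_le hb0 hb1 (by linarith)
      have h3 : (n : ℝ) = 0 := by linarith
      exact_mod_cast h3
    subst hn
    refine Or.inr (Or.inl ⟨F.O + ((k : ℝ) - F.a) • F.p, F.extreme_p k hk, ?_, ?_⟩)
    · have h := mem_extremePoints_image (translation (F.lat m 0)) (F.extreme_p k' hk')
      convert h using 1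
      rw [translation_apply, ← hkk]
      unfold lat
      push_cast
      module
    · apply Set.Subset.antisymm
      · rintro v ⟨hv1, hv2⟩
        rw [F.mem_iff] at hv1
        rw [F.mem_translate] at hv2
        obtain ⟨hv1x, -⟩ := F.box hv1
        obtain ⟨hv2x, -⟩ := F.box hv2
        obtain ⟨j, -, hj, -, -, hjif, hy⟩ := ends ha0 ha1 hm hv1x hv2x
        obtain rfl : j = k := by rw [hjif, hkif]
        rw [hy, one ha0 ha1 hj] at hv1
        have hx : F.Y v = 0 := eq_zero_of_gaugeFn_le hb0 hb1 (by linarith)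
        rw [Set.mem_singleton_iff, F.coord v, hx, hy]
        module
      · rw [Set.singleton_subset_iff]
        refine ⟨(F.extreme_p k hk).1, ?_⟩
        rw [mem_translation_image]
        convert (F.extreme_p k' hk').1 using 1
        rw [← hkk]
        unfold lat
        push_cast
        module

theorem translate_turn (m n m' n' : ℤ) : halfTurn (F.c + F.lat m' n') '' Q =
    translation (F.lat m n) '' (halfTurn (F.c + F.lat (m' - m) (n' - n)) '' Q) := by
  rw [Set.image_image]
  refine Set.image_congr fun v _ => ?_
  simp only [translation_apply, halfTurn_apply, lat]
  push_cast
  module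

theorem translate_translate (m n m' n' : ℤ) : translation (F.lat m' n') '' Q =
    translation (F.lat m n) '' (translation (F.lat (m' - m) (n' - n)) '' Q) := by
  rw [Set.image_image]
  refine Set.image_congr fun v _ => ?_
  simp only [translation_apply, lat]
  push_cast
  module

theorem turn_translate (m n m' n' : ℤ) : halfTurn (F.c + F.lat m' n') '' Q =
    halfTurn (F.c + F.lat m n) '' (translation (F.lat (m - m') (n - n')) '' Q) := by
  rw [Set.image_image]
  refine Set.image_congr fun v _ => ?_
  simp only [translation_apply, halfTurn_apply, lat]
  push_cast
  module

/-- The isometries that produce the tiles form a group, so it suffices to compare `Q` itself with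
the other tiles. -/
theorem meetsProperly {s t : Set Plane} (hs : s ∈ F.tiling) (ht : t ∈ F.tiling) (hst : s ≠ t) :
    MeetsProperly s t := by
  obtain ⟨m, n, rfl | rfl⟩ := hs <;> obtain ⟨m', n', rfl | rfl⟩ := ht
  · rw [F.translate_translate m n m' n']
    refine (F.meetsProperly_translate _ _ ?_).image _
    rintro ⟨h1, h2⟩
    obtain rfl : m' = m := by omega
    obtain rfl : n' = n := by omega
    exact hst rfl
  · rw [F.translate_turn m n m' n']
    exact (F.meetsProperly_turn _ _).image _
  · rw [F.translate_turn m' n' m n]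
    exact ((F.meetsProperly_turn _ _).image _).symm
  · rw [F.turn_translate m n m' n']
    refine (F.meetsProperly_translate _ _ ?_).image _
    rintro ⟨h1, h2⟩
    obtain rfl : m' = m := by omega
    obtain rfl : n' = n := by omega
    exact hst rfl

theorem translateSet_mem {t : Set Plane} (i j : ℤ) (ht : t ∈ F.tiling) :
    TranslateSet (F.lat i j) t ∈ F.tiling := by
  obtain ⟨m, n, rfl | rfl⟩ := ht
  · refine ⟨m + i, n + j, Or.inl ?_⟩
    unfold TranslateSet
    rw [Set.image_image]
    refine Set.image_congr fun v _ => ?_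
    simp only [translation_apply, lat]
    push_cast
    module
  · refine ⟨m + i, n + j, Or.inr ?_⟩
    unfold TranslateSet
    rw [Set.image_image]
    refine Set.image_congr fun v _ => ?_
    simp only [halfTurn_apply, lat]
    push_cast
    module

end DiagonalFrame

/-- Every convex quadrilateral admits a periodic edge-to-edge monohedral tiling of
the plane. -/
theorem convexQuadrilateral_admits_periodic_edgeToEdge_tiling
    (Q : Set Plane) (hQ : IsConvexNGon Q 4) :
    ∃ T : Set (Set Plane),
      IsMonohedralTiling Q T ∧ IsEdgeToEdge T ∧ IsPeriodicTiling T := by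
  obtain ⟨F⟩ := exists_diagonalFrame hQ
  refine ⟨F.tiling, ⟨?_, F.cover, ?_⟩, ?_, F.p, F.q, F.indep, ?_, ?_⟩
  · rintro t ⟨m, n, rfl | rfl⟩
    · exact ⟨(translation (F.lat m n)).toIsometryEquiv, rfl⟩
    · exact ⟨(halfTurn (F.c + F.lat m n)).toIsometryEquiv, rfl⟩
  · intro s hs t ht hst
    exact (F.meetsProperly hs ht hst).disjoint_interior
  · intro s hs t ht hst
    exact F.meetsProperly hs ht hst
  · intro t ht
    simpa [DiagonalFrame.lat] using F.translateSet_mem 1 0 ht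
  · intro t ht
    simpa [DiagonalFrame.lat] using F.translateSet_mem 0 1 ht
end
end

section
/- Every convex hexagon in ℝ² whose three pairs of opposite edges are parallel and of equal length (a centrally symmetric convex hexagon) admits a periodic monohedral tiling of the plane in which every tile is a translate of the hexagon. -/
/-!
Let `O` be the centre of the hexagon and `O ± a`, `O ± b`, `O ± c` its vertices, so that `a`, `b`,
`c`, `-a`, `-b`, `-c` is the cyclic order. The tiles are the translates by the lattice spanned by
`a + b` and `b + c`, which carry edges to their opposite edges.

Write `[x, y]` for the determinant of two plane vectors. No vertex off an edge lies on its line, and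
all of them lie on the same side of it (`cross_mul_cross_pos_of_edge`). Applied to the edges `AB`
and `BC` this says that `P = [b,c] + [a,c] - [a,b]`, `Q = [a,b] + [a,c] - [b,c]` and
`R = [a,b] + [b,c] - [a,c]` are nonzero and of one sign; reversing the labelling makes them positive.
Then the hexagon is the intersection of the strips `|[b - a, x]| ≤ [a,b]`, `|[c - b, x]| ≤ [b,c]`,
`|[a + c, x]| ≤ [a,c]` around `O`: a point of this intersection lies in one of the six triangles
spanned by `O` and an edge (`mem_hexagon_of_strips`).

In the coordinates `(s, t)` of the basis `-(a + b)`, `b + c`, the strips become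
`|s R + (s - t) Q| ≤ (Q + R) / 2`, `|(s - t) P - t R| ≤ (P + R) / 2`, `|s P + t Q| ≤ (P + Q) / 2`,
and the lattice becomes `ℤ²`. This is the Voronoi cell of `0` in `ℤ²` for the quadratic form
`PR s² + QR t² + PQ (s - t)²`. Both halves of the tiling property are elementary in this form: a
point of the triangle `(0,0), (1,0), (1,1)` belongs to the cell of its nearest corner
(`exists_inHexCoords`), and a nonzero integer vector violates one of the doubled strict
inequalities (`eq_zero_of_lt_strips`), so that interiors of distinct tiles are disjoint.
-/

open EuclideanGeometry

noncomputable section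

/-- A convex hexagon with vertices `A,B,C,D,E,F` listed in cyclic order along the
boundary, so that consecutive listed vertices span the edges. -/
def IsConvexHexagonWithVertices (A B C D E F : Plane) (H : Set Plane) : Prop :=
  H = convexHull ℝ {A, B, C, D, E, F} ∧
  Set.extremePoints ℝ H = {A, B, C, D, E, F} ∧
  ({A, B, C, D, E, F} : Set Plane).ncard = 6 ∧
  IsEdgeOf (segment ℝ A B) H ∧ IsEdgeOf (segment ℝ B C) H ∧ IsEdgeOf (segment ℝ C D) H ∧
  IsEdgeOf (segment ℝ D E) H ∧ IsEdgeOf (segment ℝ E F) H ∧ IsEdgeOf (segment ℝ F A) H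

/-! ### Integer translates in lattice coordinates -/

/-- For a point of the triangle `(0,0), (1,0), (1,1)`, two of the three strip conditions defining the
hexagon centred at a corner imply the third. Here `e` and `y` are the barycentric coordinates of the
point with respect to the two other corners, and `X, Y, Z` are `P, Q, R` in some order. -/
lemma third_strip_of_two_strips {X Y Z e y : ℝ} (hX : 0 < X) (hY : 0 < Y) (hZ : 0 < Z)
    (he : 0 ≤ e) (hy : 0 ≤ y)
    (h1 : e * Y + (e + y) * Z ≤ (Y + Z) / 2) (h2 : (e + y) * X + y * Y ≤ (X + Y) / 2) :
    |e * X - y * Z| ≤ (X + Z) / 2 := by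
  have he2 : e ≤ 1 / 2 := by
    by_contra! h
    nlinarith
  have hy2 : y ≤ 1 / 2 := by
    by_contra! h
    nlinarith
  rw [abs_le]
  constructor <;> nlinarith

/-- The point with coordinates `(s, t)` in the basis `-(a + b), b + c` of the lattice lies in the
hexagon centred at `0`, the intersection of three strips of half-widths `[a,b] = (Q + R) / 2`,
`[b,c] = (P + R) / 2` and `[a,c] = (P + Q) / 2`. -/
def InHexCoords (P Q R s t : ℝ) : Prop :=
  |s * R + (s - t) * Q| ≤ (Q + R) / 2 ∧ |(s - t) * P - t * R| ≤ (P + R) / 2 ∧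
    |s * P + t * Q| ≤ (P + Q) / 2

lemma inHexCoords_neg {P Q R s t : ℝ} (h : InHexCoords P Q R s t) :
    InHexCoords P Q R (-s) (-t) := by
  obtain ⟨h1, h2, h3⟩ := h
  refine ⟨?_, ?_, ?_⟩
  · rw [← abs_neg]; convert h1 using 2; ring
  · rw [← abs_neg]; convert h2 using 2; ring
  · rw [← abs_neg]; convert h3 using 2; ring

/-- Covering of one half of the unit square by the hexagons centred at its three corners. -/
lemma exists_inHexCoords_triangle {P Q R : ℝ} (hP : 0 < P) (hQ : 0 < Q) (hR : 0 < R) (x y : ℝ)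
    (hy : 0 ≤ y) (hyx : y ≤ x) (hx : x ≤ 1) :
    ∃ m n : ℤ, InHexCoords P Q R (x - m) (y - n) := by
  obtain ⟨e, rfl⟩ : ∃ e, x = y + e := ⟨x - y, by ring⟩
  obtain ⟨g, hye⟩ : ∃ g, y = 1 - e - g := ⟨1 - e - y, by ring⟩
  have he : 0 ≤ e := by linarith
  have hg : 0 ≤ g := by linarith
  -- `I`, `J`, `K` compare the corners `(0,0)`, `(1,0)`, `(1,1)` pairwise; each negation is the
  -- reverse comparison since the two sides of a comparison add up to `Q + R`, `P + R`, `P + Q`.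
  by_cases I : e * Q + (e + y) * R ≤ (Q + R) / 2
  · by_cases J : (e + y) * P + y * Q ≤ (P + Q) / 2
    · have := third_strip_of_two_strips hP hQ hR he hy I J
      refine ⟨0, 0, ?_, ?_, ?_⟩
      · rw [abs_le]; push_cast; constructor <;> nlinarith
      · convert this using 2; push_cast; ring
      · rw [abs_le]; push_cast; constructor <;> nlinarith
    · by_cases K : e * P + (e + g) * R ≤ (P + R) / 2
      · have := third_strip_of_two_strips hQ hP hR he hg K (by subst hye; linarith)
        refine ⟨1, 1, ?_, ?_, ?_⟩
        · convert this using 2; subst hye; push_cast; ring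
        · rw [abs_le]; subst hye; push_cast; constructor <;> nlinarith
        · rw [abs_le]; subst hye; push_cast; constructor <;> nlinarith
      · -- A cyclic outcome is impossible: multiplied by `P`, `R`, `Q`, the comparisons `I`, `J`, `K`
        -- add up to a strict inequality between equal numbers.
        exfalso
        subst hye
        push Not at J K
        nlinarith [mul_le_mul_of_nonneg_left I hP.le, mul_lt_mul_of_pos_left J hR,
          mul_lt_mul_of_pos_left K hQ]
  · by_cases K : (g + y) * P + y * R ≤ (P + R) / 2
    · have := third_strip_of_two_strips hP hR hQ hg hy (by subst hye; linarith) (by linarith)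
      push Not at I
      refine ⟨1, 0, ?_, ?_, ?_⟩
      · rw [abs_le]; subst hye; push_cast; constructor <;> nlinarith
      · rw [abs_le]; subst hye; push_cast; constructor <;> nlinarith
      · rw [abs_sub_comm] at this
        convert this using 2; subst hye; push_cast; ring
    · by_cases J : g * P + (e + g) * Q ≤ (P + Q) / 2
      · have := third_strip_of_two_strips hQ hP hR he hg (by subst hye; linarith) (by linarith)
        refine ⟨1, 1, ?_, ?_, ?_⟩
        · convert this using 2; subst hye; push_cast; ring
        · rw [abs_le]; subst hye; push_cast; constructor <;> nlinarith
        · rw [abs_le]; subst hye; push_cast; constructor <;> nlinarith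
      · exfalso
        subst hye
        push Not at I J K
        nlinarith [mul_lt_mul_of_pos_left I hP, mul_lt_mul_of_pos_left J hR,
          mul_lt_mul_of_pos_left K hQ]

lemma exists_inHexCoords {P Q R : ℝ} (hP : 0 < P) (hQ : 0 < Q) (hR : 0 < R) (s t : ℝ) :
    ∃ m n : ℤ, InHexCoords P Q R (s - m) (t - n) := by
  have hs := Int.floor_le s
  have hs' := Int.lt_floor_add_one s
  have ht := Int.floor_le t
  have ht' := Int.lt_floor_add_one t
  rcases le_total (t - ⌊t⌋) (s - ⌊s⌋) with h | h
  · obtain ⟨m, n, hmn⟩ := exists_inHexCoords_triangle hP hQ hR (s - ⌊s⌋) (t - ⌊t⌋)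
      (by linarith) h (by linarith)
    refine ⟨⌊s⌋ + m, ⌊t⌋ + n, ?_⟩
    convert hmn using 1 <;> push_cast <;> ring
  · -- The other half of the square is the first one after the point reflection in its centre.
    obtain ⟨m, n, hmn⟩ := exists_inHexCoords_triangle hP hQ hR (1 - (s - ⌊s⌋)) (1 - (t - ⌊t⌋))
      (by linarith) (by linarith) (by linarith)
    refine ⟨⌊s⌋ + 1 - m, ⌊t⌋ + 1 - n, ?_⟩
    convert inHexCoords_neg hmn using 1 <;> push_cast <;> ring

/-- A lattice vector inside the open hexagon of twice the size is zero. -/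
lemma eq_zero_of_lt_strips {P Q R : ℝ} (hP : 0 < P) (hQ : 0 < Q) (hR : 0 < R) (m n : ℤ)
    (h1 : |m * R + (m - n) * Q| < Q + R) (h2 : |(m - n) * P - n * R| < P + R)
    (h3 : |m * P + n * Q| < P + Q) : m = 0 ∧ n = 0 := by
  have key : ∀ i j : ℤ, ∀ X Y : ℝ, 0 < X → 0 < Y → |i * X + j * Y| < X + Y →
      ¬ (1 ≤ i ∧ 1 ≤ j) ∧ ¬ (i ≤ -1 ∧ j ≤ -1) := by
    intro i j X Y hX hY h
    rw [abs_lt] at h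
    constructor
    · rintro ⟨hi, hj⟩
      have hi : (1 : ℝ) ≤ i := by exact_mod_cast hi
      have hj : (1 : ℝ) ≤ j := by exact_mod_cast hj
      nlinarith
    · rintro ⟨hi, hj⟩
      have hi : (i : ℝ) ≤ -1 := by exact_mod_cast hi
      have hj : (j : ℝ) ≤ -1 := by exact_mod_cast hj
      nlinarith
  have k1 := key m (m - n) R Q hR hQ (by push_cast; linarith)
  have k2 := key (m - n) (-n) P R hP hR
    (by push_cast; rw [neg_mul, ← sub_eq_add_neg]; exact h2)
  have k3 := key m n P Q hP hQ h3
  omega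

/-! ### The planar determinant -/

/-- The determinant of two vectors of the plane. -/
def cross (x y : Plane) : ℝ := x 0 * y 1 - x 1 * y 0

lemma plane_ext {x y : Plane} (h0 : x 0 = y 0) (h1 : x 1 = y 1) : x = y := by
  ext i
  fin_cases i
  · exact h0
  · exact h1

lemma cross_interior_lt {p : Plane} (hp : p ≠ 0) {S : Set Plane} {k : ℝ}
    (hS : ∀ x ∈ S, cross p x ≤ k) {x : Plane} (hx : x ∈ interior S) : cross p x < k := by
  let f : Plane →ₗ[ℝ] ℝ :=
    { toFun := cross p
      map_add' := by intro x y; simp only [cross, PiLp.add_apply]; ring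
      map_smul' := by
        intro r x
        simp only [cross, PiLp.smul_apply, smul_eq_mul, RingHom.id_apply]; ring }
  have hf0 : f ≠ 0 := by
    intro h
    apply hp
    have e0 : cross p !₂[1, 0] = 0 := LinearMap.congr_fun h _
    have e1 : cross p !₂[0, 1] = 0 := LinearMap.congr_fun h _
    simp [cross] at e0 e1
    exact plane_ext (by simpa using e1) (by simpa using e0)
  have hopen : IsOpenMap f :=
    f.isOpenMap_of_finiteDimensional (LinearMap.surjective hf0)
  have hsub : f '' interior S ⊆ interior (Set.Iic k) := by
    refine interior_maximal ?_ (hopen _ isOpen_interior)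
    rintro _ ⟨y, hy, rfl⟩
    exact hS y (interior_subset hy)
  rw [interior_Iic] at hsub
  exact hsub ⟨x, hx, rfl⟩

/-! ### The hexagon as an intersection of three strips -/

/-- The centrally symmetric hexagon with centre `O` and vertices `O ± a`, `O ± b`, `O ± c`. -/
def hexagon (O a b c : Plane) : Set Plane :=
  convexHull ℝ {O + a, O + b, O + c, O - a, O - b, O - c}

lemma sector_mem {S : Set Plane} (hS : Convex ℝ S) {O a b x : Plane} (hO : O ∈ S)
    (ha : O + a ∈ S) (hb : O + b ∈ S) (hab : 0 < cross a b) (h1 : 0 ≤ cross a x)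
    (h2 : cross b x ≤ 0) (h3 : -cross (b - a) x ≤ cross a b) : O + x ∈ S := by
  have hsum : -cross (b - a) x = cross a x - cross b x := by
    simp only [cross, PiLp.sub_apply]; ring
  have key := hS.sum_mem (t := Finset.univ) (z := ![O, O + a, O + b])
    (w := ![1 - cross a x / cross a b + cross b x / cross a b, -cross b x / cross a b,
      cross a x / cross a b]) ?_ ?_ ?_
  · convert key using 1
    have hne := hab.ne'
    simp only [Fin.sum_univ_three, Matrix.cons_val_zero, Matrix.cons_val_one, Matrix.cons_val]
    apply plane_ext <;>
    · simp only [PiLp.add_apply, PiLp.smul_apply, smul_eq_mul]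
      field_simp
      simp only [cross]
      ring
  · intro i _
    fin_cases i
    · have : 1 - cross a x / cross a b + cross b x / cross a b
        = (cross a b - cross a x + cross b x) / cross a b := by field_simp
      simp only [Fin.zero_eta, Matrix.cons_val_zero, this]
      exact div_nonneg (by linarith) hab.le
    · exact div_nonneg (by linarith) hab.le
    · exact div_nonneg h1 hab.le
  · simp only [Fin.sum_univ_three, Matrix.cons_val_zero, Matrix.cons_val_one, Matrix.cons_val]
    ring
  · intro i _
    fin_cases i
    exacts [hO, ha, hb]

lemma mem_hexagon_of_strips {O a b c x : Plane} (hab : 0 < cross a b) (hbc : 0 < cross b c)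
    (hac : 0 < cross a c) (h1 : |cross (b - a) x| ≤ cross a b)
    (h2 : |cross (c - b) x| ≤ cross b c) (h3 : |cross (-a - c) x| ≤ cross a c) :
    O + x ∈ hexagon O a b c := by
  have hS : Convex ℝ (hexagon O a b c) := convex_convexHull ..
  have mem : ∀ y ∈ ({O + a, O + b, O + c, O - a, O - b, O - c} : Set Plane),
      y ∈ hexagon O a b c := fun y hy => subset_convexHull ℝ _ hy
  have ma : O + a ∈ hexagon O a b c := mem _ (by simp)
  have mb : O + b ∈ hexagon O a b c := mem _ (by simp)
  have mc : O + c ∈ hexagon O a b c := mem _ (by simp)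
  have ma' : O + -a ∈ hexagon O a b c := mem _ (by simp [sub_eq_add_neg])
  have mb' : O + -b ∈ hexagon O a b c := mem _ (by simp [sub_eq_add_neg])
  have mc' : O + -c ∈ hexagon O a b c := mem _ (by simp [sub_eq_add_neg])
  have mO : O ∈ hexagon O a b c := by
    have := hS ma ma' (a := 1 / 2) (b := 1 / 2) (by norm_num) (by norm_num) (by norm_num)
    convert this using 1
    module
  rw [abs_le] at h1 h2 h3
  simp only [cross, PiLp.sub_apply, PiLp.neg_apply] at hab hbc hac h1 h2 h3
  -- The signs of `cross a x`, `cross b x`, `cross c x` tell which of the six sectors contains `x`.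
  rcases le_total 0 (cross a x) with ha | ha <;> rcases le_total 0 (cross b x) with hb | hb <;>
    rcases le_total 0 (cross c x) with hc | hc <;>
    simp only [cross] at ha hb hc <;>
    first
    | (refine sector_mem hS mO ma mb ?_ ?_ ?_ ?_ <;>
        (simp only [cross, PiLp.sub_apply]; linarith))
    | (refine sector_mem hS mO mb mc ?_ ?_ ?_ ?_ <;>
        (simp only [cross, PiLp.sub_apply]; linarith))
    | (refine sector_mem hS mO mc ma' ?_ ?_ ?_ ?_ <;>
        (simp only [cross, PiLp.sub_apply, PiLp.neg_apply]; linarith))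
    | (refine sector_mem hS mO ma' mb' ?_ ?_ ?_ ?_ <;>
        (simp only [cross, PiLp.sub_apply, PiLp.neg_apply]; linarith))
    | (refine sector_mem hS mO mb' mc' ?_ ?_ ?_ ?_ <;>
        (simp only [cross, PiLp.sub_apply, PiLp.neg_apply]; linarith))
    | (refine sector_mem hS mO mc' ma ?_ ?_ ?_ ?_ <;>
        (simp only [cross, PiLp.sub_apply, PiLp.neg_apply]; linarith))

lemma convex_cross_le (p : Plane) (k : ℝ) : Convex ℝ {x | cross p x ≤ k} := by
  intro x hx y hy s t hs ht hst
  simp only [Set.mem_ofPred_eq] at *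
  have : cross p (s • x + t • y) = s * cross p x + t * cross p y := by
    simp only [cross, PiLp.add_apply, PiLp.smul_apply, smul_eq_mul]; ring
  rw [this]
  calc s * cross p x + t * cross p y ≤ s * k + t * k := by gcongr
    _ = k := by rw [← add_mul, hst, one_mul]

/-- When the six vertices of the hexagon lie in a closed half-plane, so does the whole hexagon, and
its interior lies in the open half-plane; stated for a translate of the hexagon. -/
lemma interior_translate_hexagon_lt {O a b c p v x : Plane} {k : ℝ} (hp : p ≠ 0)
    (ha : |cross p a| ≤ k) (hb : |cross p b| ≤ k) (hc : |cross p c| ≤ k)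
    (hx : x ∈ interior (TranslateSet v (hexagon O a b c))) : cross p (x - v - O) < k := by
  have hsub : hexagon O a b c ⊆ {y | cross p y ≤ k + cross p O} := by
    apply convexHull_min _ (convex_cross_le _ _)
    rw [abs_le] at ha hb hc
    simp only [cross] at ha hb hc
    rintro y (rfl | rfl | rfl | rfl | rfl | rfl) <;>
    · simp only [cross, Set.mem_ofPred_eq, PiLp.add_apply, PiLp.sub_apply]
      linarith
  have hS : ∀ y ∈ TranslateSet v (hexagon O a b c), cross p y ≤ k + cross p O + cross p v := by
    rintro _ ⟨y, hy, rfl⟩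
    have := hsub hy
    simp only [cross, Set.mem_ofPred_eq, PiLp.add_apply] at *
    linarith
  have := cross_interior_lt hp hS hx
  simp only [cross, PiLp.sub_apply] at *
  linarith

lemma interior_translate_hexagon_abs_lt {O a b c p v x : Plane} {k : ℝ} (hp : p ≠ 0)
    (ha : |cross p a| ≤ k) (hb : |cross p b| ≤ k) (hc : |cross p c| ≤ k)
    (hx : x ∈ interior (TranslateSet v (hexagon O a b c))) : |cross p (x - v - O)| < k := by
  have hneg : ∀ y, cross (-p) y = -cross p y := by
    intro y; simp only [cross, PiLp.neg_apply]; ring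
  have h1 := interior_translate_hexagon_lt hp ha hb hc hx
  have h2 := interior_translate_hexagon_lt (k := k) (neg_ne_zero.mpr hp) (by rwa [hneg, abs_neg])
    (by rwa [hneg, abs_neg]) (by rwa [hneg, abs_neg]) hx
  rw [hneg] at h2
  rw [abs_lt]
  constructor <;> linarith

/-! ### The lattice tiling -/

/-- The lattice vector with coordinates `(m, n)`. The basis vectors carry the edge from `O + a` to
`O + b` to its opposite edge, and the edge from `O - b` to `O - c` to its opposite edge. -/
def latticeVec (a b c : Plane) (m n : ℤ) : Plane := (m : ℝ) • (-(a + b)) + (n : ℝ) • (b + c)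

/-- The translates of the hexagon by all lattice vectors. -/
def latticeTiling (O a b c : Plane) : Set (Set Plane) :=
  {t | ∃ m n : ℤ, t = TranslateSet (latticeVec a b c m n) (hexagon O a b c)}

lemma translateSet_translateSet (v w : Plane) (S : Set Plane) :
    TranslateSet v (TranslateSet w S) = TranslateSet (w + v) S := by
  simp only [TranslateSet, Set.image_image, add_assoc]

lemma latticeTiling_works {O a b c : Plane} (hP : 0 < cross b c + cross a c - cross a b)
    (hQ : 0 < cross a b + cross a c - cross b c) (hR : 0 < cross a b + cross b c - cross a c) :
    IsMonohedralTiling (hexagon O a b c) (latticeTiling O a b c) ∧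
      (∀ t ∈ latticeTiling O a b c, ∃ v, t = TranslateSet v (hexagon O a b c)) ∧
      IsPeriodicTiling (latticeTiling O a b c) := by
  have hab : 0 < cross a b := by linarith
  have hbc : 0 < cross b c := by linarith
  have hac : 0 < cross a c := by linarith
  refine ⟨⟨?_, ?_, ?_⟩, ?_, ?_⟩
  · rintro t ⟨m, n, rfl⟩
    exact ⟨IsometryEquiv.addRight (latticeVec a b c m n), rfl⟩
  · refine Set.eq_univ_of_forall fun y => ?_
    have hd : 0 < cross a b + cross a c + cross b c := by linarith
    set d := cross a b + cross a c + cross b c with hd_def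
    -- Cramer's rule for the coordinates of `y - O` in the basis of the lattice.
    obtain ⟨s, t, hst⟩ : ∃ s t : ℝ, y - O = s • (-(a + b)) + t • (b + c) := by
      refine ⟨-cross (y - O) (b + c) / d, cross (a + b) (y - O) / d, ?_⟩
      have hne := hd.ne'
      apply plane_ext <;>
      · simp only [PiLp.add_apply, PiLp.smul_apply, PiLp.neg_apply, smul_eq_mul]
        field_simp
        simp only [hd_def, cross, PiLp.add_apply, PiLp.sub_apply]
        ring
    obtain ⟨m, n, h1, h2, h3⟩ := exists_inHexCoords hP hQ hR s t
    refine ⟨_, ⟨m, n, rfl⟩, y - latticeVec a b c m n, ?_, sub_add_cancel _ _⟩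
    have hy : y - latticeVec a b c m n = O + ((s - m) • (-(a + b)) + (t - n) • (b + c)) := by
      rw [← sub_add_cancel y O, hst, latticeVec]
      module
    rw [hy]
    refine mem_hexagon_of_strips hab hbc hac ?_ ?_ ?_
    · convert h1 using 2 <;>
      · simp only [cross, PiLp.add_apply, PiLp.sub_apply, PiLp.smul_apply, PiLp.neg_apply,
          smul_eq_mul]
        ring
    · convert h2 using 2 <;>
      · simp only [cross, PiLp.add_apply, PiLp.sub_apply, PiLp.smul_apply, PiLp.neg_apply,
          smul_eq_mul]
        ring
    · rw [← abs_neg]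
      convert h3 using 2 <;>
      · simp only [cross, PiLp.add_apply, PiLp.sub_apply, PiLp.smul_apply, PiLp.neg_apply,
          smul_eq_mul]
        ring
  · rintro _ ⟨m, n, rfl⟩ _ ⟨m', n', rfl⟩ hne
    rw [Set.disjoint_left]
    intro x hx hx'
    apply hne
    have strip : ∀ p : Plane, ∀ k : ℝ, 0 < |cross p a| + |cross p b| → |cross p a| ≤ k →
        |cross p b| ≤ k → |cross p c| ≤ k →
        |cross p (latticeVec a b c (m - m') (n - n'))| < k + k := by
      intro p k hp ha hb hc
      have hp0 : p ≠ 0 := by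
        rintro rfl
        simp [cross] at hp
      have l1 := interior_translate_hexagon_abs_lt hp0 ha hb hc hx
      have l2 := interior_translate_hexagon_abs_lt hp0 ha hb hc hx'
      have : cross p (latticeVec a b c (m - m') (n - n')) =
          cross p (x - latticeVec a b c m' n' - O) - cross p (x - latticeVec a b c m n - O) := by
        simp only [cross, latticeVec, PiLp.add_apply, PiLp.sub_apply, PiLp.smul_apply,
          PiLp.neg_apply, smul_eq_mul]
        push_cast
        ring
      rw [this]
      calc _ ≤ _ := abs_sub _ _
        _ < k + k := add_lt_add l2 l1
    have pa : cross (b - a) a = -cross a b := by simp only [cross, PiLp.sub_apply]; ring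
    have pb : cross (b - a) b = -cross a b := by simp only [cross, PiLp.sub_apply]; ring
    have pc : cross (b - a) c = cross b c - cross a c := by simp only [cross, PiLp.sub_apply]; ring
    have qa : cross (c - b) a = cross a b - cross a c := by simp only [cross, PiLp.sub_apply]; ring
    have qb : cross (c - b) b = -cross b c := by simp only [cross, PiLp.sub_apply]; ring
    have qc : cross (c - b) c = -cross b c := by simp only [cross, PiLp.sub_apply]; ring
    have ra : cross (a + c) a = -cross a c := by simp only [cross, PiLp.add_apply]; ring
    have rb : cross (a + c) b = cross a b - cross b c := by
      simp only [cross, PiLp.add_apply]; ring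
    have rc : cross (a + c) c = cross a c := by simp only [cross, PiLp.add_apply]; ring
    have e1 := strip (b - a) (cross a b)
      (by rw [pa, abs_neg, abs_of_pos hab]; positivity)
      (by rw [pa, abs_neg, abs_of_pos hab]) (by rw [pb, abs_neg, abs_of_pos hab])
      (by rw [pc, abs_le]; constructor <;> linarith)
    have e2 := strip (c - b) (cross b c)
      (by rw [qb, abs_neg, abs_of_pos hbc]; positivity)
      (by rw [qa, abs_le]; constructor <;> linarith)
      (by rw [qb, abs_neg, abs_of_pos hbc]) (by rw [qc, abs_neg, abs_of_pos hbc])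
    have e3 := strip (a + c) (cross a c)
      (by rw [ra, abs_neg, abs_of_pos hac]; positivity)
      (by rw [ra, abs_neg, abs_of_pos hac])
      (by rw [rb, abs_le]; constructor <;> linarith) (by rw [rc, abs_of_pos hac])
    have := eq_zero_of_lt_strips hP hQ hR (m - m') (n - n')
      (by
        convert e1 using 1
        · congr 1
          simp only [cross, latticeVec, PiLp.add_apply, PiLp.sub_apply, PiLp.smul_apply,
            PiLp.neg_apply, smul_eq_mul]
          ring
        · ring)
      (by
        convert e2 using 1
        · congr 1
          simp only [cross, latticeVec, PiLp.add_apply, PiLp.sub_apply, PiLp.smul_apply,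
            PiLp.neg_apply, smul_eq_mul]
          ring
        · ring)
      (by
        convert e3 using 1
        · congr 1
          simp only [cross, latticeVec, PiLp.add_apply, PiLp.smul_apply,
            PiLp.neg_apply, smul_eq_mul]
          ring
        · ring)
    obtain ⟨hm, hn⟩ := this
    rw [sub_eq_zero.mp hm, sub_eq_zero.mp hn]
  · rintro t ⟨m, n, rfl⟩
    exact ⟨_, rfl⟩
  · refine ⟨-(a + b), b + c, ?_, ?_, ?_⟩
    · rw [LinearIndependent.pair_iff]
      intro s t hst
      have e0 := congrArg (fun z : Plane => z 0) hst
      have e1 := congrArg (fun z : Plane => z 1) hst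
      simp only [PiLp.add_apply, PiLp.smul_apply, PiLp.neg_apply, smul_eq_mul,
        PiLp.zero_apply] at e0 e1
      have hd : cross a b + cross a c + cross b c ≠ 0 := by linarith
      simp only [cross] at hd
      constructor
      · apply (mul_eq_zero.mp ?_).resolve_right hd
        linear_combination (c 0 + b 0) * e1 - (b 1 + c 1) * e0
      · apply (mul_eq_zero.mp ?_).resolve_right hd
        linear_combination (a 0 + b 0) * e1 - (a 1 + b 1) * e0
    · rintro _ ⟨m, n, rfl⟩
      refine ⟨m + 1, n, ?_⟩
      rw [translateSet_translateSet]
      congr 1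
      simp only [latticeVec]
      push_cast
      module
    · rintro _ ⟨m, n, rfl⟩
      refine ⟨m, n + 1, ?_⟩
      rw [translateSet_translateSet]
      congr 1
      simp only [latticeVec]
      push_cast
      module

/-! ### Edges are supporting lines -/

lemma mem_segment_of_cross_eq_zero {H : Set Plane} {A B z : Plane} (hAB : A ≠ B)
    (hE : IsExtreme ℝ H (segment ℝ A B)) (hz : z ∈ H) (h0 : cross (B - A) (z - A) = 0) :
    z ∈ segment ℝ A B := by
  have hA : A ∈ segment ℝ A B := left_mem_segment ..
  have hB : B ∈ segment ℝ A B := right_mem_segment ..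
  obtain ⟨t, ht⟩ : ∃ t : ℝ, z = A + t • (B - A) := by
    have hpos : (B 0 - A 0) ^ 2 + (B 1 - A 1) ^ 2 ≠ 0 := by
      intro h
      apply hAB
      apply plane_ext <;> nlinarith [sq_nonneg (B 0 - A 0), sq_nonneg (B 1 - A 1)]
    refine ⟨((B 0 - A 0) * (z 0 - A 0) + (B 1 - A 1) * (z 1 - A 1)) /
      ((B 0 - A 0) ^ 2 + (B 1 - A 1) ^ 2), ?_⟩
    simp only [cross, PiLp.sub_apply] at h0
    apply plane_ext
    · simp only [PiLp.add_apply, PiLp.smul_apply, PiLp.sub_apply, smul_eq_mul]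
      field_simp
      linear_combination -(B 1 - A 1) * h0
    · simp only [PiLp.add_apply, PiLp.smul_apply, PiLp.sub_apply, smul_eq_mul]
      field_simp
      linear_combination (B 0 - A 0) * h0
  rcases lt_or_ge t 0 with h | h
  · refine hE.left_mem_of_mem_openSegment hz (hE.subset hB) hA
      ⟨1 / (1 - t), -t / (1 - t), by apply div_pos <;> linarith, by apply div_pos <;> linarith,
        ?_, ?_⟩
    · have : 1 - t ≠ 0 := by linarith
      field_simp
      ring
    · have : 1 - t ≠ 0 := by linarith
      rw [ht]
      apply plane_ext <;>
      · simp only [PiLp.add_apply, PiLp.smul_apply, PiLp.sub_apply, smul_eq_mul]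
        field_simp
        ring
  · rcases le_or_gt t 1 with h' | h'
    · refine ⟨1 - t, t, by linarith, h, by ring, ?_⟩
      rw [ht]
      module
    · refine hE.left_mem_of_mem_openSegment hz (hE.subset hA) hB
        ⟨1 / t, (t - 1) / t, by positivity, by apply div_pos <;> linarith, ?_, ?_⟩
      · field_simp
        ring
      · rw [ht]
        apply plane_ext <;>
        · simp only [PiLp.add_apply, PiLp.smul_apply, PiLp.sub_apply, smul_eq_mul]
          field_simp
          ring

/-- Two points of a convex set never lie strictly on different sides of the line of an edge. -/
lemma not_strict_sides_of_edge {H : Set Plane} (hH : Convex ℝ H) {A B x y : Plane} (hAB : A ≠ B)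
    (hE : IsExtreme ℝ H (segment ℝ A B)) (hx : x ∈ H) (hy : y ∈ H)
    (h1 : 0 < cross (B - A) (x - A)) (h2 : cross (B - A) (y - A) < 0) : False := by
  obtain ⟨k, hk⟩ : ∃ k, k = cross (B - A) (x - A) := ⟨_, rfl⟩
  obtain ⟨l, hl⟩ : ∃ l, l = -cross (B - A) (y - A) := ⟨_, rfl⟩
  have hk0 : 0 < k := by linarith
  have hl0 : 0 < l := by linarith
  have hsum : l / (k + l) + k / (k + l) = 1 := by field_simp; ring
  have hz0 : cross (B - A) ((l / (k + l)) • x + (k / (k + l)) • y - A) = 0 := by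
    have : cross (B - A) ((l / (k + l)) • x + (k / (k + l)) • y - A) =
        l / (k + l) * k + k / (k + l) * (-l) := by
      have affine : ∀ s t : ℝ, s + t = 1 → cross (B - A) (s • x + t • y - A) =
          s * cross (B - A) (x - A) + t * cross (B - A) (y - A) := by
        intro s t hst
        obtain rfl : s = 1 - t := by linarith
        simp only [cross, PiLp.add_apply, PiLp.smul_apply, PiLp.sub_apply, smul_eq_mul]
        ring
      rw [affine _ _ hsum, ← hk, show cross (B - A) (y - A) = -l by linarith]
    rw [this]
    ring
  have hzseg := mem_segment_of_cross_eq_zero hAB hE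
    (hH hx hy (by positivity) (by positivity) hsum) hz0
  obtain ⟨s, t, -, -, hst, rfl⟩ := hE.left_mem_of_mem_openSegment hx hy hzseg
    ⟨_, _, by positivity, by positivity, hsum, rfl⟩
  have : cross (B - A) (s • A + t • B - A) = 0 := by
    obtain rfl : s = 1 - t := by linarith
    simp only [cross, PiLp.add_apply, PiLp.smul_apply, PiLp.sub_apply, smul_eq_mul]
    ring
  linarith

/-- Vertices other than the ends of an edge lie strictly on the same side of its line. -/
lemma cross_mul_cross_pos_of_edge {H : Set Plane} (hH : Convex ℝ H) {A B x y : Plane}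
    (hAB : A ≠ B) (hE : IsExtreme ℝ H (segment ℝ A B)) (hx : x ∈ H.extremePoints ℝ)
    (hy : y ∈ H.extremePoints ℝ) (hxA : A ≠ x) (hxB : B ≠ x) (hyA : A ≠ y) (hyB : B ≠ y) :
    0 < cross (B - A) (x - A) * cross (B - A) (y - A) := by
  have hA : A ∈ H := hE.subset (left_mem_segment ..)
  have hB : B ∈ H := hE.subset (right_mem_segment ..)
  have nz : ∀ z ∈ H.extremePoints ℝ, A ≠ z → B ≠ z → cross (B - A) (z - A) ≠ 0 := by
    intro z hz hzA hzB h0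
    rw [mem_extremePoints_iff_forall_segment] at hz
    rcases hz.2 A hA B hB (mem_segment_of_cross_eq_zero hAB hE hz.1 h0) with h | h
    exacts [hzA h, hzB h]
  rcases lt_or_gt_of_ne (nz x hx hxA hxB) with h | h <;>
    rcases lt_or_gt_of_ne (nz y hy hyA hyB) with h' | h'
  · exact mul_pos_of_neg_of_neg h h'
  · exact (not_strict_sides_of_edge hH hAB hE hy.1 hx.1 h' h).elim
  · exact (not_strict_sides_of_edge hH hAB hE hx.1 hy.1 h h').elim
  · exact mul_pos h h'

/-- Every centrally symmetric convex hexagon (three pairs of opposite edges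
parallel and of equal length) admits a periodic monohedral tiling of the plane in
which every tile is a translate of the hexagon. -/
theorem centrallySymmetric_hexagon_admits_periodic_translate_tiling
    (A B C D E F : Plane) (H : Set Plane)
    (hH : IsConvexHexagonWithVertices A B C D E F H)
    (h1 : B - A = -(E - D)) (h2 : C - B = -(F - E)) (h3 : D - C = -(A - F)) :
    ∃ T : Set (Set Plane), IsMonohedralTiling H T ∧
      (∀ t ∈ T, ∃ v : Plane, t = TranslateSet v H) ∧ IsPeriodicTiling T := by
  obtain ⟨hHull, hExt, hCard, ⟨-, -, -, -, hAB⟩, ⟨-, -, -, -, hBC⟩, -⟩ := hH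
  have hConv : Convex ℝ H := hHull ▸ convex_convexHull ..
  have hND : [A, B, C, D, E, F].Nodup := by
    classical
    have hcoe : (([A, B, C, D, E, F] : List Plane).toFinset : Set Plane) = {A, B, C, D, E, F} := by
      ext; simp
    rw [← hcoe, Set.ncard_coe_finset] at hCard
    rw [← Multiset.coe_nodup, ← Multiset.toFinset_card_eq_card_iff_nodup]
    exact hCard
  simp only [List.nodup_cons, List.mem_cons, not_or, List.not_mem_nil, not_false_eq_true,
    and_true] at hND
  obtain ⟨⟨nAB, nAC, nAD, nAE, nAF⟩, ⟨nBC, nBD, nBE, nBF⟩, ⟨nCD, nCE, nCF⟩, -⟩ := hND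
  have hA : A ∈ H.extremePoints ℝ := by rw [hExt]; simp
  have hC : C ∈ H.extremePoints ℝ := by rw [hExt]; simp
  have hD : D ∈ H.extremePoints ℝ := by rw [hExt]; simp
  have hF : F ∈ H.extremePoints ℝ := by rw [hExt]; simp
  have k1 := cross_mul_cross_pos_of_edge hConv nAB hAB hC hF nAC nBC nAF nBF
  have k2 := cross_mul_cross_pos_of_edge hConv nBC hBC hA hD (Ne.symm nAB) (Ne.symm nAC) nBD nCD
  obtain ⟨O, hO⟩ : ∃ O : Plane, O = (1 / 2 : ℝ) • (A + D) := ⟨_, rfl⟩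
  obtain ⟨a, rfl⟩ : ∃ a, A = O + a := ⟨A - O, by abel⟩
  obtain ⟨b, rfl⟩ : ∃ b, B = O + b := ⟨B - O, by abel⟩
  obtain ⟨c, rfl⟩ : ∃ c, C = O + c := ⟨C - O, by abel⟩
  obtain rfl : D = O - a := by
    linear_combination (norm := module) (-2 : ℝ) • hO
  obtain rfl : E = O - b := by linear_combination (norm := module) h1
  obtain rfl : F = O - c := by linear_combination (norm := module) -h3
  have r1 : cross (O + b - (O + a)) (O + c - (O + a)) =
      cross a b + cross b c - cross a c := by
    simp only [cross, PiLp.add_apply, PiLp.sub_apply]; ring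
  have r2 : cross (O + b - (O + a)) (O - c - (O + a)) =
      cross a b + cross a c - cross b c := by
    simp only [cross, PiLp.add_apply, PiLp.sub_apply]; ring
  have r3 : cross (O + c - (O + b)) (O + a - (O + b)) =
      cross a b + cross b c - cross a c := by
    simp only [cross, PiLp.add_apply, PiLp.sub_apply]; ring
  have r4 : cross (O + c - (O + b)) (O - a - (O + b)) =
      cross b c + cross a c - cross a b := by
    simp only [cross, PiLp.add_apply, PiLp.sub_apply]; ring
  rw [r1, r2] at k1
  rw [r3, r4] at k2
  rcases pos_and_pos_or_neg_and_neg_of_mul_pos k1 with ⟨p1, p2⟩ | ⟨p1, p2⟩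
  · have hHex : H = hexagon O a b c := hHull
    rw [hHex]
    exact ⟨_, latticeTiling_works (pos_of_mul_pos_right k2 p1.le) p2 p1⟩
  · -- Clockwise labelling: listing the vertices backwards changes the orientation.
    have hHex : H = hexagon O c b a := by
      rw [hHull, hexagon]
      congr 1
      ext x
      simp only [Set.mem_insert_iff, Set.mem_singleton_iff]
      tauto
    rw [hHex]
    have p3 : cross b c + cross a c - cross a b < 0 := by
      by_contra! h
      exact absurd k2 (not_lt.mpr (mul_nonpos_of_nonpos_of_nonneg p1.le h))
    simp only [cross] at p1 p2 p3
    refine ⟨_, latticeTiling_works ?_ ?_ ?_⟩ <;>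
    · simp only [cross]
      linarith
end
end

section
/- No convex polygon with seven or more vertices admits a monohedral tiling of the plane. -/
/-!
The average interior angle of a convex `n`-gon with `n ≥ 7` exceeds a third of a turn, whereas
the corners of tiles meeting at a point of a tiling average at most a third of a turn.
Counting angles over the tiles near a large disc makes this contradictory.

Angles are areas. The angle `ang t p` of a convex set `t` at `p ∈ t` is the area of the part of
the cone of directions `tcone t p` inside the unit disc. Tangent cones at `p` of the tiles
through `p` cover the plane and overlap in null sets, so their angles add up to a full turn
(`sum_ang_eq_turn`).

For a polygon, the cone at a vertex is a wedge (`vertex_wedge`), of angle less than half a turn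
(`ang_vertex_lt`); at any other point the angle is exactly half a turn or a full turn
(`ang_nonvertex`). Hence the corners meeting at a point number at least three if they fill a
full turn and at least two if they fill half a turn, and they average at most a third of a turn
(`sum_vertex_ang_le`).

The angle sum of an `n`-gon is at least `(n - 2) / 2` turns (`sum_ang_ge`): the wedge at a vertex
and the normal cone there, rotated by a quarter turn, cover a half-plane, while the normal cones
at distinct vertices overlap in null sets, so that exterior angles add up to at most one turn.

Let `N R` be the number of tiles meeting the disc of radius `R`, and `D` a bound for the diameter
of the tiles. All tiles around a vertex inside the disc are counted by `N R`, and the vertices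
outside the disc belong to tiles not counted by `N (R - D)`. Comparing the two angle bounds gives
`n * N (R - D) ≤ (n - 1) * N R` (`growth`), so `N` grows exponentially. But `N` grows at most
quadratically, as the tiles have equal area (`card_mul_area_le`).
-/

open EuclideanGeometry

noncomputable section

/-! ### Tangent cones and angles -/

open MeasureTheory Metric

/-- Lebesgue measure restricted to the unit disc. Evaluated on a cone with apex `0` it is
half the angle of the cone, so that `discMeasure.real Set.univ` represents a full turn. -/
def discMeasure : Measure Plane := volume.restrict (ball 0 1)

instance : IsFiniteMeasure discMeasure :=
  ⟨by rw [discMeasure, Measure.restrict_apply_univ]; exact measure_ball_lt_top⟩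

/-- The measure of a full turn. -/
def turn : ℝ := discMeasure.real Set.univ

/-- The (not necessarily closed) cone of directions in which one can leave `p`
while staying in `t` for a positive time. -/
def tcone (t : Set Plane) (p : Plane) : Set Plane := {x | ∃ c : ℝ, 0 < c ∧ p + c • x ∈ t}

/-- The angle of `t` at `p`, in the scale in which a full turn is `turn`. -/
def ang (t : Set Plane) (p : Plane) : ℝ := discMeasure.real (tcone t p)

/-- The determinant of two plane vectors. -/
def det2 (a x : Plane) : ℝ := a 0 * x 1 - a 1 * x 0

theorem discMeasure_ac : discMeasure ≪ volume :=
  Measure.absolutelyContinuous_of_le Measure.restrict_le_self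

theorem disc_nullMeas {s : Set Plane} (hs : Convex ℝ s) : NullMeasurableSet s discMeasure :=
  (hs.nullMeasurableSet volume).mono_ac discMeasure_ac

theorem turn_pos : 0 < turn := by
  rw [turn, discMeasure, measureReal_restrict_apply_univ]
  exact ENNReal.toReal_pos (measure_ball_pos volume 0 one_pos).ne' measure_ball_lt_top.ne

theorem tcone_shrink {t : Set Plane} (ht : Convex ℝ t) {p : Plane} (hp : p ∈ t) {x : Plane}
    {c d : ℝ} (hd : 0 < d) (hdc : d ≤ c) (h : p + c • x ∈ t) : p + d • x ∈ t := by
  have hc : 0 < c := hd.trans_le hdc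
  have := ht.add_smul_mem hp h (t := d / c) ⟨by positivity, by rw [div_le_one hc]; exact hdc⟩
  rwa [smul_smul, div_mul_cancel₀ _ hc.ne'] at this

theorem convex_tcone {t : Set Plane} (ht : Convex ℝ t) {p : Plane} (hp : p ∈ t) :
    Convex ℝ (tcone t p) := by
  rintro x ⟨c, hc, hx⟩ y ⟨d, hd, hy⟩ a b ha hb hab
  have hm : 0 < min c d := lt_min hc hd
  refine ⟨min c d, hm, ?_⟩
  have h1 := tcone_shrink ht hp hm (min_le_left c d) hx
  have h2 := tcone_shrink ht hp hm (min_le_right c d) hy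
  have h := ht h1 h2 ha hb hab
  convert h using 1
  have : p = a • p + b • p := by rw [← add_smul, hab, one_smul]
  nth_rewrite 1 [this]
  module

theorem tcone_add {t : Set Plane} (ht : Convex ℝ t) {p : Plane} (hp : p ∈ t) {x y : Plane}
    (hx : x ∈ tcone t p) (hy : y ∈ tcone t p) : x + y ∈ tcone t p := by
  obtain ⟨c, hc, h⟩ := convex_tcone ht hp hx hy (a := 1/2) (b := 1/2)
    (by norm_num) (by norm_num) (by norm_num)
  refine ⟨c / 2, by positivity, ?_⟩
  convert h using 2
  module

theorem tcone_smul {t : Set Plane} {p x : Plane} (hx : x ∈ tcone t p) {r : ℝ} (hr : 0 < r) :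
    r • x ∈ tcone t p := by
  obtain ⟨c, hc, h⟩ := hx
  refine ⟨c / r, by positivity, ?_⟩
  rwa [smul_smul, div_mul_cancel₀ _ hr.ne']

theorem tcone_of_mem {t : Set Plane} {p x : Plane} (hx : x ∈ t) : x - p ∈ tcone t p :=
  ⟨1, one_pos, by simpa using hx⟩

theorem tcone_zero {t : Set Plane} {p : Plane} (hp : p ∈ t) : 0 ∈ tcone t p :=
  ⟨1, one_pos, by simpa using hp⟩

/-! ### Half-planes -/

theorem null_line (l : Plane →L[ℝ] ℝ) (hl : l ≠ 0) : discMeasure {x | l x = 0} = 0 := by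
  apply discMeasure_ac
  have := Measure.addHaar_submodule volume (LinearMap.ker (l : Plane →ₗ[ℝ] ℝ)) (by
    intro h
    apply hl
    ext1 x
    have : x ∈ LinearMap.ker (l : Plane →ₗ[ℝ] ℝ) := h ▸ Submodule.mem_top
    simpa using this)
  convert this using 2
  ext x
  simp

theorem measure_neg_half (l : Plane →L[ℝ] ℝ) :
    discMeasure {x | l x < 0} = discMeasure {x | 0 < l x} := by
  have hm1 : MeasurableSet {x | l x < 0} := (isOpen_lt (by fun_prop) (by fun_prop)).measurableSet
  have hm2 : MeasurableSet {x | 0 < l x} := (isOpen_lt (by fun_prop) (by fun_prop)).measurableSet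
  rw [discMeasure, Measure.restrict_apply hm1, Measure.restrict_apply hm2]
  have := Measure.measure_neg (volume : Measure Plane) ({x | 0 < l x} ∩ ball 0 1)
  rw [← this]
  congr 1
  ext x
  simp

theorem half_open (l : Plane →L[ℝ] ℝ) (hl : l ≠ 0) :
    discMeasure.real {x | 0 < l x} = turn / 2 := by
  have hm2 : MeasurableSet {x | 0 < l x} := (isOpen_lt (by fun_prop) (by fun_prop)).measurableSet
  have h1 : discMeasure.real {x | l x < 0} = discMeasure.real {x | 0 < l x} := by
    simp only [measureReal_def, measure_neg_half]
  have h2 := measureReal_add_measureReal_compl (μ := discMeasure) hm2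
  have h3 : discMeasure.real {x | 0 < l x}ᶜ = discMeasure.real {x | l x < 0} := by
    apply measureReal_congr
    have h0 : {x | 0 < l x}ᶜ = {x | l x < 0} ∪ {x | l x = 0} := by
      ext x; simp [le_iff_lt_or_eq]
    rw [h0]
    exact union_ae_eq_left_of_ae_eq_empty (ae_eq_empty.2 (null_line l hl))
  rw [turn]; linarith

theorem half_closed (l : Plane →L[ℝ] ℝ) (hl : l ≠ 0) :
    discMeasure.real {x | 0 ≤ l x} = turn / 2 := by
  rw [← half_open l hl]
  apply measureReal_congr
  have h0 : {x | 0 ≤ l x} = {x | 0 < l x} ∪ {x | l x = 0} := by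
    ext x; simp [le_iff_lt_or_eq, eq_comm]
  rw [h0]
  exact union_ae_eq_left_of_ae_eq_empty (ae_eq_empty.2 (null_line l hl))

/-- The functional `det2 a`, as a continuous linear map. -/
def detL (a : Plane) : Plane →L[ℝ] ℝ :=
  a 0 • EuclideanSpace.proj 1 - a 1 • EuclideanSpace.proj 0

theorem detL_apply (a x : Plane) : detL a x = det2 a x := by simp [detL, det2]

theorem detL_ne_zero {a b : Plane} (h : det2 a b ≠ 0) : detL a ≠ 0 := by
  intro h0; apply h; rw [← detL_apply, h0]; rfl

theorem detL_ne_zero' {a : Plane} (h : a ≠ 0) : detL a ≠ 0 := by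
  intro h0
  apply h
  have h1 := detL_apply a (EuclideanSpace.single 0 1)
  have h2 := detL_apply a (EuclideanSpace.single 1 1)
  rw [h0] at h1 h2
  simp [det2] at h1 h2
  ext i; fin_cases i
  · simpa using h2.symm
  · simpa using h1

/-! ### Angles of a convex polygon -/

/-- A convex polygon with `n` vertices. -/
structure IsPolygonTile (n : ℕ) (t : Set Plane) : Prop where
  compact : IsCompact t
  convex : Convex ℝ t
  interior_nonempty : (interior t).Nonempty
  finite : (Set.extremePoints ℝ t).Finite
  card : (Set.extremePoints ℝ t).ncard = n

theorem tcone_interior {t : Set Plane} {p : Plane} (hp : p ∈ interior t) :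
    tcone t p = Set.univ := by
  rw [Set.eq_univ_iff_forall]
  intro x
  have hc : Filter.Tendsto (fun c : ℝ => p + c • x) (nhdsWithin 0 (Set.Ioi 0)) (nhds p) := by
    have : Filter.Tendsto (fun c : ℝ => p + c • x) (nhds 0) (nhds (p + (0 : ℝ) • x)) := by
      apply Continuous.tendsto; fun_prop
    rw [zero_smul, add_zero] at this
    exact this.mono_left nhdsWithin_le_nhds
  have h1 := hc.eventually (mem_interior_iff_mem_nhds.1 hp)
  obtain ⟨c, hc1, hc2⟩ := (h1.and self_mem_nhdsWithin).exists
  exact ⟨c, hc2, hc1⟩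

theorem not_flat {t : Set Plane} (ht : (interior t).Nonempty) (l : Plane →L[ℝ] ℝ) (hl : l ≠ 0)
    (v : Plane) (h : ∀ x ∈ t, l (x - v) = 0) : False := by
  obtain ⟨z, hz⟩ := ht
  apply hl
  ext u
  obtain ⟨c, hc, hu⟩ : u ∈ tcone t z := by rw [tcone_interior hz]; trivial
  have h1 := h _ hu
  have h2 := h z (interior_subset hz)
  simp only [map_sub, map_add, map_smul, smul_eq_mul] at h1 h2
  have : c * l u = 0 := by linarith
  simpa [hc.ne'] using this

theorem poly_eq_hull {n : ℕ} {t : Set Plane} (ht : IsPolygonTile n t) :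
    convexHull ℝ (Set.extremePoints ℝ t) = t := by
  have h := closure_convexHull_extremePoints ht.compact ht.convex
  rwa [(ht.finite.isClosed_convexHull ℝ).closure_eq] at h

/-- At a vertex `v` a polygon spans a wedge, bounded by the two edge directions `a` and `b`.
These are found as the directions to other vertices of extremal slope, relative to a
linear functional that exposes `v`. -/
theorem vertex_wedge {n : ℕ} {t : Set Plane} (ht : IsPolygonTile n t) {v : Plane}
    (hv : v ∈ Set.extremePoints ℝ t) :
    ∃ a b : Plane, 0 < det2 a b ∧ v + a ∈ t ∧ v + b ∈ t ∧
      ∀ x ∈ t, 0 ≤ det2 a (x - v) ∧ 0 ≤ det2 (x - v) b := by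
  set W := Set.extremePoints ℝ t \ {v} with hW
  have hWfin : W.Finite := ht.finite.subset Set.sdiff_subset
  have hWt : W ⊆ t := fun x hx => hx.1.1
  have hvW : v ∉ convexHull ℝ W := by
    intro h
    have h1 := inter_extremePoints_subset_extremePoints_of_subset
      (convexHull_min hWt ht.convex) ⟨h, hv⟩
    exact (extremePoints_convexHull_subset h1).2 rfl
  -- A functional exposing `v`, and the induced description of `t`.
  obtain ⟨f, u, hfv, hf⟩ := geometric_hahn_banach_point_closed (convex_convexHull ℝ W)
    (hWfin.isClosed_convexHull ℝ) hvW
  have hfpos : ∀ x ∈ W, 0 < f (x - v) := fun x hx => by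
    rw [map_sub]; linarith [hf x (subset_convexHull ℝ W hx)]
  have hmin : ∀ l : Plane →L[ℝ] ℝ, (∀ x ∈ W, 0 ≤ l (x - v)) → ∀ x ∈ t, 0 ≤ l (x - v) := by
    intro l hl
    have hc : Convex ℝ {x : Plane | 0 ≤ l (x - v)} := by
      have : {x : Plane | 0 ≤ l (x - v)} = {x : Plane | l v ≤ l x} := by
        ext x; simp
      rw [this]
      exact convex_halfSpace_ge l.toLinearMap.isLinear _
    have : convexHull ℝ (Set.extremePoints ℝ t) ⊆ {x : Plane | 0 ≤ l (x - v)} := by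
      apply convexHull_min _ hc
      intro x hx
      by_cases hxv : x = v
      · simp [hxv]
      · exact hl x ⟨hx, hxv⟩
    rw [poly_eq_hull ht] at this
    exact this
  have hWne : W.Nonempty := by
    by_contra hne
    rw [Set.not_nonempty_iff_eq_empty] at hne
    have key : ∀ l : Plane →L[ℝ] ℝ, ∀ x ∈ t, 0 ≤ l (x - v) := fun l =>
      hmin l (by simp [hne])
    refine not_flat ht.interior_nonempty (EuclideanSpace.proj (0 : Fin 2)) ?_ v ?_
    · intro h
      have := congrArg (fun l : Plane →L[ℝ] ℝ => l (EuclideanSpace.single 0 1)) h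
      simp at this
    · intro x hx
      have h1 := key (EuclideanSpace.proj (0 : Fin 2)) x hx
      have h2 := key (-EuclideanSpace.proj (0 : Fin 2)) x hx
      rw [neg_apply] at h2
      linarith
  set d : Plane := !₂[f (EuclideanSpace.single 0 1), f (EuclideanSpace.single 1 1)] with hd
  have hfd : ∀ y : Plane, f y = d 0 * y 0 + d 1 * y 1 := by
    intro y
    have : y = y 0 • EuclideanSpace.single 0 1 + y 1 • EuclideanSpace.single 1 1 := by
      ext i; fin_cases i <;> simp
    conv_lhs => rw [this]
    simp [hd, mul_comm]
  set s : Plane → ℝ := fun x => det2 d (x - v) / f (x - v) with hs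
  obtain ⟨xa, hxa, ha⟩ := Set.exists_min_image W s hWfin hWne
  obtain ⟨xb, hxb, hb⟩ := Set.exists_max_image W s hWfin hWne
  have hq : 0 < d 0 ^ 2 + d 1 ^ 2 := by
    have h1 := hfpos xa hxa
    rw [hfd] at h1
    by_contra hcon
    have h0 : d 0 = 0 := by nlinarith [sq_nonneg (d 0), sq_nonneg (d 1)]
    have h1' : d 1 = 0 := by nlinarith [sq_nonneg (d 0), sq_nonneg (d 1)]
    rw [h0, h1'] at h1
    simp at h1
  have horder : ∀ x ∈ W, ∀ y ∈ W, s x ≤ s y → 0 ≤ det2 (x - v) (y - v) := by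
    intro x hx y hy hxy
    have h1 := hfpos x hx
    have h2 := hfpos y hy
    rw [hs] at hxy
    simp only at hxy
    rw [div_le_div_iff₀ h1 h2] at hxy
    have hid : (d 0 ^ 2 + d 1 ^ 2) * det2 (x - v) (y - v)
        = f (x - v) * det2 d (y - v) - det2 d (x - v) * f (y - v) := by
      rw [hfd, hfd]; simp only [det2]; ring
    have : 0 ≤ (d 0 ^ 2 + d 1 ^ 2) * det2 (x - v) (y - v) := by rw [hid]; linarith
    exact nonneg_of_mul_nonneg_right this hq
  have hdetA : ∀ x ∈ t, 0 ≤ det2 (xa - v) (x - v) := by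
    intro x hx
    have := hmin (detL (xa - v)) (fun y hy => by
      rw [detL_apply]; exact horder _ hxa _ hy (ha y hy)) x hx
    rwa [detL_apply] at this
  have hanti : ∀ x y : Plane, det2 x y = - det2 y x := fun x y => by simp only [det2]; ring
  have hdetB : ∀ x ∈ t, 0 ≤ det2 (x - v) (xb - v) := by
    intro x hx
    have := hmin (-detL (xb - v)) (fun y hy => by
      rw [neg_apply, detL_apply, ← hanti]
      exact horder _ hy _ hxb (hb y hy)) x hx
    rwa [neg_apply, detL_apply, ← hanti] at this
  refine ⟨xa - v, xb - v, ?_, by simpa using hWt hxa, by simpa using hWt hxb,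
    fun x hx => ⟨hdetA x hx, hdetB x hx⟩⟩
  refine lt_of_le_of_ne (hdetA xb (hWt hxb)) fun h0 => ?_
  -- If the extremal slopes agree, the polygon is contained in a line.
  have hane : xa - v ≠ 0 := sub_ne_zero.2 hxa.2
  refine not_flat ht.interior_nonempty (detL (xa - v)) (detL_ne_zero' hane) v fun x hx => ?_
  rw [detL_apply]
  have h1 := hdetA x hx
  have h2 := hdetB x hx
  have hfa := hfpos xa hxa
  have hfb := hfpos xb hxb
  have hid : f (xa - v) * det2 (x - v) (xb - v) + f (xb - v) * det2 (xa - v) (x - v)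
      = f (x - v) * det2 (xa - v) (xb - v) := by
    simp only [hfd, det2]; ring
  rw [← h0, mul_zero] at hid
  have h3 := mul_nonneg hfa.le h2
  have h4 : f (xb - v) * det2 (xa - v) (x - v) ≤ 0 := by linarith
  nlinarith

theorem tcone_wedge {t : Set Plane} (ht : Convex ℝ t) {v a b : Plane} (hv : v ∈ t)
    (hab : 0 < det2 a b) (ha : v + a ∈ t) (hb : v + b ∈ t) {x : Plane}
    (h1 : 0 ≤ det2 a x) (h2 : 0 ≤ det2 x b) : x ∈ tcone t v := by
  have ha' : a ∈ tcone t v := ⟨1, one_pos, by simpa using ha⟩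
  have hb' : b ∈ tcone t v := ⟨1, one_pos, by simpa using hb⟩
  have hsm : ∀ y ∈ tcone t v, ∀ r : ℝ, 0 ≤ r → r • y ∈ tcone t v := by
    intro y hy r hr
    rcases hr.eq_or_lt with h | h
    · rw [← h, zero_smul]; exact tcone_zero hv
    · exact tcone_smul hy h
  have hx : x = (det2 x b / det2 a b) • a + (det2 a x / det2 a b) • b := by
    have hne := hab.ne'
    ext i; fin_cases i <;>
    · simp
      field_simp
      simp only [det2]; ring
  rw [hx]
  exact tcone_add ht hv (hsm _ ha' _ (by positivity)) (hsm _ hb' _ (by positivity))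

theorem ang_vertex_lt {n : ℕ} {t : Set Plane} (ht : IsPolygonTile n t) {v : Plane}
    (hv : v ∈ Set.extremePoints ℝ t) : ang t v < turn / 2 := by
  obtain ⟨a, b, hab, -, -, hx⟩ := vertex_wedge ht hv
  set U : Set Plane := {x | 0 < detL a x} ∩ {x | 0 < detL b x} with hU
  have hUo : IsOpen U := (isOpen_lt (by fun_prop) (by fun_prop)).inter
    (isOpen_lt (by fun_prop) (by fun_prop))
  have hUpos : 0 < discMeasure.real U := by
    apply ENNReal.toReal_pos _ (measure_ne_top _ _)
    rw [discMeasure, Measure.restrict_apply hUo.measurableSet]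
    apply ((hUo.inter isOpen_ball).measure_pos volume _).ne'
    have hp : 0 < 1 + ‖b - a‖ := by positivity
    refine ⟨(1 + ‖b - a‖)⁻¹ • (b - a), ⟨?_, ?_⟩, ?_⟩
    · simp only [Set.mem_ofPred_eq, map_smul, smul_eq_mul]
      apply mul_pos (by positivity)
      rw [detL_apply]
      simp only [det2, PiLp.sub_apply] at hab ⊢; linarith
    · simp only [Set.mem_ofPred_eq, map_smul, smul_eq_mul]
      apply mul_pos (by positivity)
      rw [detL_apply]
      simp only [det2, PiLp.sub_apply] at hab ⊢; linarith
    · rw [mem_ball_zero_iff, norm_smul, norm_inv, Real.norm_of_nonneg hp.le,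
        inv_mul_lt_iff₀ hp]
      linarith
  have hC : ∀ x ∈ tcone t v, 0 ≤ det2 a x ∧ 0 ≤ det2 x b := by
    rintro x ⟨c, hc, hxt⟩
    have := hx _ hxt
    simp only [add_sub_cancel_left, det2, PiLp.smul_apply, smul_eq_mul] at this
    constructor
    · apply nonneg_of_mul_nonneg_right (a := c) _ hc
      simp only [det2]; linarith [this.1]
    · apply nonneg_of_mul_nonneg_right (a := c) _ hc
      simp only [det2]; linarith [this.2]
  have hdisj : Disjoint (tcone t v) U := by
    rw [Set.disjoint_left]
    rintro x hxc ⟨-, hxb⟩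
    have := (hC x hxc).2
    simp only [Set.mem_ofPred_eq, detL_apply, det2] at this hxb
    linarith
  have h1 := measureReal_union (μ := discMeasure) hdisj hUo.measurableSet
  have h2 : discMeasure.real (tcone t v ∪ U) ≤ discMeasure.real {x | 0 ≤ detL a x} := by
    refine measureReal_mono ?_
    rintro x (hxc | hxU)
    · simp only [Set.mem_ofPred_eq, detL_apply]; exact (hC x hxc).1
    · exact le_of_lt (Set.mem_ofPred_eq ▸ hxU.1)
  rw [half_closed _ (detL_ne_zero hab.ne')] at h2
  rw [ang]; linarith

/-- The outer normal cone of `t` at `v`, rotated by a quarter turn. -/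
def ncone (t : Set Plane) (v : Plane) : Set Plane := {w | ∀ x ∈ t, 0 ≤ det2 (x - v) w}

/-- Interior and exterior angle at a vertex add up to at least half a turn: if `a` is the
first edge direction, the half-plane `0 ≤ det2 a w` is covered by the wedge at `v` and the
rotated normal cone. -/
theorem half_le_ang_add_ncone {n : ℕ} {t : Set Plane} (ht : IsPolygonTile n t) {v : Plane}
    (hv : v ∈ Set.extremePoints ℝ t) :
    turn / 2 ≤ ang t v + discMeasure.real (ncone t v) := by
  obtain ⟨a, b, hab, ha, hb, hx⟩ := vertex_wedge ht hv
  rw [ang, ← half_closed _ (detL_ne_zero hab.ne')]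
  refine le_trans (measureReal_mono ?_) (measureReal_union_le _ _)
  intro w hw
  simp only [Set.mem_ofPred_eq, detL_apply] at hw
  by_cases hwb : 0 ≤ det2 w b
  · exact Or.inl (tcone_wedge ht.convex hv.1 hab ha hb hw hwb)
  · right
    intro x hxt
    obtain ⟨h1, h2⟩ := hx x hxt
    have hid : det2 a b * det2 (x - v) w
        = det2 (x - v) b * det2 a w + det2 a (x - v) * (-det2 w b) := by
      simp only [det2]; ring
    apply nonneg_of_mul_nonneg_right (a := det2 a b) _ hab
    rw [hid]
    have : 0 ≤ -det2 w b := by linarith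
    positivity

theorem convex_ncone (t : Set Plane) (v : Plane) : Convex ℝ (ncone t v) := by
  intro x hx y hy a b ha hb _ z hz
  have h1 := mul_nonneg ha (hx z hz)
  have h2 := mul_nonneg hb (hy z hz)
  simp only [det2, PiLp.add_apply, PiLp.smul_apply, smul_eq_mul] at h1 h2 ⊢
  linarith

/-- The exterior angles of a polygon add up to at most one turn, because normal cones at
different vertices overlap in a null set. -/
theorem sum_ncone_le {n : ℕ} {t : Set Plane} (ht : IsPolygonTile n t) :
    ∑ v ∈ ht.finite.toFinset, discMeasure.real (ncone t v) ≤ turn := by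
  rw [← measureReal_biUnion_finset₀]
  · exact measureReal_mono (Set.subset_univ _)
  · intro v hv w hw hvw
    have hv' : v ∈ t := (ht.finite.mem_toFinset.1 hv).1
    have hw' : w ∈ t := (ht.finite.mem_toFinset.1 hw).1
    refine measure_mono_null ?_ (null_line (detL (v - w)) (detL_ne_zero' (sub_ne_zero.2 hvw)))
    rintro x ⟨h1, h2⟩
    have h3 := h1 w hw'
    have h4 := h2 v hv'
    simp only [Set.mem_ofPred_eq, detL_apply]
    simp only [det2, PiLp.sub_apply] at h3 h4 ⊢
    linarith
  · exact fun v _ => disc_nullMeas (convex_ncone t v)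

theorem sum_ang_ge {n : ℕ} {t : Set Plane} (ht : IsPolygonTile n t) :
    ((n : ℝ) - 2) * (turn / 2) ≤ ∑ v ∈ ht.finite.toFinset, ang t v := by
  have h1 : ∑ v ∈ ht.finite.toFinset, turn / 2 ≤
      ∑ v ∈ ht.finite.toFinset, (ang t v + discMeasure.real (ncone t v)) :=
    Finset.sum_le_sum fun v hv => half_le_ang_add_ncone ht (ht.finite.mem_toFinset.1 hv)
  rw [Finset.sum_add_distrib, Finset.sum_const, nsmul_eq_mul,
    ← Set.ncard_eq_toFinset_card _ ht.finite, ht.card] at h1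
  linarith [sum_ncone_le ht]

/-- At a point of a polygon which is not a vertex, the angle is half a turn or a full turn. -/
theorem ang_nonvertex {n : ℕ} {t : Set Plane} (ht : IsPolygonTile n t) {p : Plane} (hp : p ∈ t)
    (hpv : p ∉ Set.extremePoints ℝ t) : ang t p = turn / 2 ∨ ang t p = turn := by
  by_cases hpi : p ∈ interior t
  · right; rw [ang, tcone_interior hpi, turn]
  left
  obtain ⟨f, hf⟩ := geometric_hahn_banach_open_point ht.convex.interior isOpen_interior hpi
  obtain ⟨z, hz⟩ := ht.interior_nonempty
  have hfz := hf z hz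
  have hft : ∀ x ∈ t, f x ≤ f p := by
    intro x hx
    have hcl : t ⊆ closure (interior t) := by
      rw [ht.convex.closure_interior_eq_closure_of_nonempty_interior ⟨z, hz⟩]
      exact subset_closure
    have : closure (interior t) ⊆ {y | f y ≤ f p} :=
      closure_minimal (fun y hy => (hf y hy).le) (isClosed_le (by fun_prop) (by fun_prop))
    exact this (hcl hx)
  have hfne : -f ≠ 0 := by
    intro h
    have : f = 0 := neg_eq_zero.1 h
    rw [this] at hfz; simp at hfz
  rw [ang]
  apply le_antisymm
  · rw [← half_closed _ hfne]
    refine measureReal_mono ?_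
    rintro x ⟨c, hc, hx⟩
    have := hft _ hx
    simp only [map_add, map_smul, smul_eq_mul] at this
    simp only [Set.mem_ofPred_eq, neg_apply]
    nlinarith
  · rw [← half_open _ hfne]
    refine measureReal_mono ?_
    intro w hw
    simp only [Set.mem_ofPred_eq, neg_apply] at hw
    -- `p` lies strictly between two points `x`, `y` of `t`, both on the supporting line.
    rw [mem_extremePoints_iff_left] at hpv
    push Not at hpv
    obtain ⟨x, hx, y, hy, hseg, hxp⟩ := hpv hp
    obtain ⟨α, β, hα, hβ, hαβ, hcomb⟩ := hseg
    have hfx := hft x hx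
    have hfy := hft y hy
    have hsum : α * f x + β * f y = f p := by rw [← hcomb]; simp
    have hfx' : f x = f p := by
      apply le_antisymm hfx
      have hb : β = 1 - α := by linarith
      subst hb
      nlinarith
    have hxc : x - p ∈ tcone t p := tcone_of_mem hx
    have hyc : y - p ∈ tcone t p := tcone_of_mem hy
    have hzc : z - p ∈ tcone t p := tcone_of_mem (interior_subset hz)
    have hneg : -(x - p) ∈ tcone t p := by
      have : -(x - p) = (β / α) • (y - p) := by
        have h0 : α • (x - p) + β • (y - p) = 0 := by
          have : α • (x - p) + β • (y - p) = (α • x + β • y) - (α + β) • p := by module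
          rw [this, hcomb, hαβ, one_smul, sub_self]
        have h1 : β • (y - p) = -(α • (x - p)) := by
          rw [eq_neg_iff_add_eq_zero, add_comm]; exact h0
        rw [div_eq_inv_mul, mul_smul, h1, smul_neg, smul_smul, inv_mul_cancel₀ hα.ne', one_smul]
      rw [this]
      exact tcone_smul hyc (by positivity)
    set k : ℝ := f w / f (z - p) with hk
    have hfzp : f (z - p) < 0 := by rw [map_sub]; linarith
    have hkpos : 0 < k := div_pos_of_neg_of_neg (by linarith) hfzp
    -- The remainder `w - k (z - p)` lies on the supporting line.
    have hrem : f (w - k • (z - p)) = 0 := by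
      rw [map_sub, map_smul, smul_eq_mul, hk, div_mul_cancel₀ _ hfzp.ne, sub_self]
    have hline : ∃ r : ℝ, w - k • (z - p) = r • (x - p) := by
      have hker : f (x - p) = 0 := by rw [map_sub, hfx', sub_self]
      have hxp' : x - p ≠ 0 := sub_ne_zero.2 hxp
      have hfd : ∀ y : Plane, f y =
          f (EuclideanSpace.single 0 1) * y 0 + f (EuclideanSpace.single 1 1) * y 1 := by
        intro y
        have : y = y 0 • EuclideanSpace.single 0 1 + y 1 • EuclideanSpace.single 1 1 := by
          ext i; fin_cases i <;> simp
        conv_lhs => rw [this]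
        simp [mul_comm]
      generalize w - k • (z - p) = e at *
      generalize x - p = q at *
      rw [hfd] at hrem hker
      generalize f (EuclideanSpace.single 0 1) = f0 at *
      generalize f (EuclideanSpace.single 1 1) = f1 at *
      have hdet : det2 q e = 0 := by
        have h0 : f0 * det2 q e = 0 := by
          simp only [det2]; linear_combination e 1 * hker - q 1 * hrem
        have h1 : f1 * det2 q e = 0 := by
          simp only [det2]; linear_combination q 0 * hrem - e 0 * hker
        by_contra hne
        have h0' : f0 = 0 := by simpa [hne] using h0
        have h1' : f1 = 0 := by simpa [hne] using h1
        rw [hfd z, hfd p, h0', h1'] at hfz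
        simp at hfz
      have hq : q 0 ^ 2 + q 1 ^ 2 ≠ 0 := by
        intro h
        apply hxp'
        ext i; fin_cases i
        · have : q 0 = 0 := by nlinarith [sq_nonneg (q 0), sq_nonneg (q 1)]
          simpa using this
        · have : q 1 = 0 := by nlinarith [sq_nonneg (q 0), sq_nonneg (q 1)]
          simpa using this
      refine ⟨(q 0 * e 0 + q 1 * e 1) / (q 0 ^ 2 + q 1 ^ 2), ?_⟩
      simp only [det2] at hdet
      ext i; fin_cases i
      · simp
        field_simp
        linear_combination (-q 1) * hdet
      · simp
        field_simp
        linear_combination (q 0) * hdet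
    obtain ⟨r, hr⟩ := hline
    have hw' : w = k • (z - p) + r • (x - p) := by rw [← hr]; abel
    rw [hw']
    refine tcone_add ht.convex hp (tcone_smul hzc hkpos) ?_
    rcases lt_trichotomy r 0 with h | h | h
    · have : r • (x - p) = (-r) • (-(x - p)) := by module
      rw [this]; exact tcone_smul hneg (by linarith)
    · rw [h, zero_smul]; exact tcone_zero hp
    · exact tcone_smul hxc h

/-! ### Angles around a point of a tiling -/

theorem volume_inter_eq_zero {s t : Set Plane} (hs : Convex ℝ s) (ht : Convex ℝ t)
    (hd : Disjoint (interior s) (interior t)) : volume (s ∩ t) = 0 := by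
  refine measure_mono_null (t := frontier s ∪ frontier t) ?_
    (measure_union_null (hs.addHaar_frontier volume) (ht.addHaar_frontier volume))
  rintro x ⟨hxs, hxt⟩
  by_cases h1 : x ∈ interior s
  · exact Or.inr ⟨subset_closure hxt, fun h2 => Set.disjoint_left.1 hd h1 h2⟩
  · exact Or.inl ⟨subset_closure hxs, h1⟩

theorem tcone_aedisjoint {s t : Set Plane} (hs : Convex ℝ s) (ht : Convex ℝ t)
    (hd : Disjoint (interior s) (interior t)) {p : Plane} (hps : p ∈ s) (hpt : p ∈ t) :
    AEDisjoint discMeasure (tcone s p) (tcone t p) := by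
  apply discMeasure_ac
  refine measure_mono_null
    (t := ⋃ k : ℕ, (fun x : Plane => (1 / ((k : ℝ) + 1)) • x) ⁻¹'
      ((fun x => p + x) ⁻¹' (s ∩ t))) ?_ ?_
  · rintro x ⟨⟨c, hc, hxs⟩, ⟨d, hd, hxt⟩⟩
    obtain ⟨k, hk⟩ := exists_nat_one_div_lt (lt_min hc hd)
    have hk0 : (0 : ℝ) < 1 / ((k : ℝ) + 1) := by positivity
    rw [Set.mem_iUnion]
    exact ⟨k, tcone_shrink hs hps hk0 (hk.le.trans (min_le_left _ _)) hxs,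
      tcone_shrink ht hpt hk0 (hk.le.trans (min_le_right _ _)) hxt⟩
  · rw [measure_iUnion_null_iff]
    intro k
    have hk0 : (1 : ℝ) / ((k : ℝ) + 1) ≠ 0 := by positivity
    rw [Measure.addHaar_preimage_smul _ hk0, measure_preimage_add,
      volume_inter_eq_zero hs ht hd, mul_zero]

/-- A tiling of the plane by convex polygons with `n` vertices, of equal area `A` and
diameter at most `D`; this is all that is used about congruence of the tiles. -/
structure IsPolygonTiling (n : ℕ) (A D : ℝ) (T : Set (Set Plane)) : Prop where
  poly : ∀ t ∈ T, IsPolygonTile n t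
  cover : ⋃₀ T = Set.univ
  disj : T.Pairwise (fun s t => Disjoint (interior s) (interior t))
  area : ∀ t ∈ T, volume.real t = A
  dist_le : ∀ t ∈ T, ∀ x ∈ t, ∀ y ∈ t, dist x y ≤ D
  area_pos : 0 < A
  diam_pos : 0 < D

/-- The tiles that meet the closed disc of radius `R` about the origin. -/
def near (T : Set (Set Plane)) (R : ℝ) : Set (Set Plane) :=
  {t ∈ T | (t ∩ closedBall 0 R).Nonempty}

section Tiling

variable {n : ℕ} {A D : ℝ} {T : Set (Set Plane)}

theorem card_mul_area_le (hT : IsPolygonTiling n A D T) {R : ℝ} (F : Finset (Set Plane))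
    (hF : (F : Set (Set Plane)) ⊆ near T R) :
    (F.card : ℝ) * A ≤ volume.real (closedBall (0 : Plane) (R + D)) := by
  have hfin : ∀ t ∈ F, volume t ≠ ⊤ := fun t ht => (hT.poly t (hF ht).1).compact.measure_ne_top
  have h1 : volume.real (⋃ t ∈ F, t) = ∑ t ∈ F, volume.real t := by
    apply measureReal_biUnion_finset₀ (f := fun t : Set Plane => t)
    · intro s hs t ht hst
      exact volume_inter_eq_zero (hT.poly s (hF hs).1).convex (hT.poly t (hF ht).1).convex
        (hT.disj (hF hs).1 (hF ht).1 hst)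
    · exact fun t ht => (hT.poly t (hF ht).1).convex.nullMeasurableSet volume
  rw [Finset.sum_congr rfl fun t ht => hT.area t (hF ht).1, Finset.sum_const,
    nsmul_eq_mul] at h1
  rw [← h1]
  refine measureReal_mono ?_ measure_closedBall_lt_top.ne
  intro x hx
  simp only [Set.mem_iUnion] at hx
  obtain ⟨t, ht, hxt⟩ := hx
  obtain ⟨y, hyt, hyR⟩ := (hF ht).2
  have h2 := hT.dist_le t (hF ht).1 x hxt y hyt
  rw [mem_closedBall] at hyR ⊢
  linarith [dist_triangle x y 0]

theorem near_finite (hT : IsPolygonTiling n A D T) (R : ℝ) : (near T R).Finite := by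
  by_contra hinf
  obtain ⟨k, hk⟩ := exists_nat_gt (volume.real (closedBall (0 : Plane) (R + D)) / A)
  obtain ⟨F, hF, hcard⟩ := Set.Infinite.exists_subset_card_eq hinf k
  have h := card_mul_area_le hT F hF
  rw [hcard] at h
  rw [div_lt_iff₀ hT.area_pos] at hk
  linarith

theorem mem_near_of_mem {t : Set Plane} (ht : t ∈ T) {p : Plane} (hp : p ∈ t) {R : ℝ}
    (hR : ‖p‖ ≤ R) : t ∈ near T R :=
  ⟨ht, p, hp, by simpa using hR⟩

/-- The tangent cones at `p` of the tiles through `p` cover the plane, by local finiteness. -/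
theorem sum_ang_eq_turn (hT : IsPolygonTiling n A D T) (p : Plane) (F : Finset (Set Plane))
    (hF : ∀ t, t ∈ F ↔ t ∈ T ∧ p ∈ t) : ∑ t ∈ F, ang t p = turn := by
  have hpoly : ∀ t ∈ F, IsPolygonTile n t := fun t ht => hT.poly t ((hF t).1 ht).1
  have hU : ⋃ t ∈ F, tcone t p = Set.univ := by
    rw [Set.eq_univ_iff_forall]
    intro x
    set G : Set (Set Plane) := {t ∈ near T (‖p‖ + 1) | p ∉ t} with hG
    have hGfin : G.Finite := (near_finite hT _).subset (Set.sep_subset _ _)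
    have hGcl : IsClosed (⋃ t ∈ G, t) :=
      hGfin.isClosed_biUnion fun t ht => (hT.poly t ht.1.1).compact.isClosed
    set W : Set Plane := (⋃ t ∈ G, t)ᶜ ∩ ball p 1 with hW
    have hWo : IsOpen W := hGcl.isOpen_compl.inter isOpen_ball
    have hpW : p ∈ W := by
      refine ⟨?_, mem_ball_self one_pos⟩
      simp only [Set.mem_compl_iff, Set.mem_iUnion, not_exists]
      exact fun t ht => ht.2
    have hx : x ∈ tcone W p := by
      rw [tcone_interior (by rwa [hWo.interior_eq])]; trivial
    obtain ⟨c, hc, hxc, hxb⟩ := hx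
    have hcov : p + c • x ∈ ⋃₀ T := by rw [hT.cover]; trivial
    obtain ⟨t, htT, hxt⟩ := hcov
    have hpt : p ∈ t := by
      by_contra hpt
      apply hxc
      simp only [Set.mem_iUnion]
      refine ⟨t, ⟨mem_near_of_mem htT hxt ?_, hpt⟩, hxt⟩
      rw [mem_ball, dist_eq_norm, add_sub_cancel_left] at hxb
      linarith [norm_add_le p (c • x)]
    simp only [Set.mem_iUnion]
    exact ⟨t, (hF t).2 ⟨htT, hpt⟩, c, hc, hxt⟩
  rw [turn, ← hU, measureReal_biUnion_finset₀]
  · rfl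
  · intro s hs t ht hst
    have hs' := (hF s).1 hs
    have ht' := (hF t).1 ht
    exact tcone_aedisjoint (hpoly s hs).convex (hpoly t ht).convex
      (hT.disj hs'.1 ht'.1 hst) hs'.2 ht'.2
  · exact fun t ht => disc_nullMeas (convex_tcone (hpoly t ht).convex ((hF t).1 ht).2)

open Classical in
/-- The angles of the corners meeting at `p` are on average at most a third of a turn. The
tiles having `p` as a non-vertex use up a multiple `m` of half a turn; what remains is filled
by corners of less than half a turn, so there are at least `3 - m` of these. -/
theorem sum_vertex_ang_le (hT : IsPolygonTiling n A D T) (p : Plane) (F : Finset (Set Plane))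
    (hF : ∀ t, t ∈ F ↔ t ∈ T ∧ p ∈ Set.extremePoints ℝ t) :
    ∑ t ∈ F, ang t p ≤ F.card * (turn / 3) := by
  rcases F.eq_empty_or_nonempty with h0 | hne
  · simp [h0]
  have hfin : {t | t ∈ T ∧ p ∈ t}.Finite :=
    (near_finite hT ‖p‖).subset fun t ht => mem_near_of_mem ht.1 ht.2 le_rfl
  set E := hfin.toFinset with hE
  have hEmem : ∀ t, t ∈ E ↔ t ∈ T ∧ p ∈ t := fun t => by simp [hE]
  have hsum := sum_ang_eq_turn hT p E hEmem
  have hFE : F ⊆ E := fun t ht => (hEmem t).2 ⟨((hF t).1 ht).1, ((hF t).1 ht).2.1⟩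
  rw [← Finset.sum_sdiff hFE] at hsum
  have hm : ∃ m : ℕ, ∑ t ∈ E \ F, ang t p = m * (turn / 2) := by
    have hval : ∀ t ∈ E \ F, ∃ m : ℕ, ang t p = m * (turn / 2) := by
      intro t ht
      rw [Finset.mem_sdiff, hEmem, hF] at ht
      rcases ang_nonvertex (hT.poly t ht.1.1) ht.1.2 (fun h => ht.2 ⟨ht.1.1, h⟩) with h | h
      · exact ⟨1, by rw [h]; norm_num⟩
      · exact ⟨2, by rw [h]; push_cast; ring⟩
    choose! g hg using hval
    refine ⟨∑ t ∈ E \ F, g t, ?_⟩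
    rw [Finset.sum_congr rfl hg, Nat.cast_sum, Finset.sum_mul]
  obtain ⟨m, hm⟩ := hm
  have hlt : ∑ t ∈ F, ang t p < ∑ t ∈ F, turn / 2 :=
    Finset.sum_lt_sum_of_nonempty hne fun t ht =>
      ang_vertex_lt (hT.poly t ((hF t).1 ht).1) ((hF t).1 ht).2
  rw [Finset.sum_const, nsmul_eq_mul] at hlt
  have hS : ∑ t ∈ F, ang t p = turn - m * (turn / 2) := by linarith
  rw [hS] at hlt ⊢
  have hpos := turn_pos
  have hk : 2 < F.card + m := by
    by_contra hcon
    have : ((F.card + m : ℕ) : ℝ) ≤ (2 : ℕ) := by exact_mod_cast not_lt.1 hcon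
    push_cast at this
    nlinarith
  have hk' : ((3 : ℕ) : ℝ) ≤ ((F.card + m : ℕ) : ℝ) := by exact_mod_cast hk
  push_cast at hk'
  have hm0 : (0 : ℝ) ≤ m := Nat.cast_nonneg m
  nlinarith

/-! ### Counting tiles -/

theorem near_mono {R S : ℝ} (h : R ≤ S) : near T R ⊆ near T S := fun _ ht =>
  ⟨ht.1, ht.2.mono (Set.inter_subset_inter_right _ (closedBall_subset_closedBall h))⟩

open Classical in
/-- Double counting of the angles of all tiles near the disc of radius `R`: the corners
inside the disc average at most a third of a turn, so the excess of a polygon with at least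
seven vertices must come from tiles near the boundary circle. -/
theorem growth (hn : 7 ≤ n) (hT : IsPolygonTiling n A D T) (R : ℝ) :
    (n : ℝ) * (near T (R - D)).ncard ≤ ((n : ℝ) - 1) * (near T R).ncard := by
  have hpos := turn_pos
  set F := (near_finite hT R).toFinset with hFdef
  set F' := (near_finite hT (R - D)).toFinset with hFdef'
  have hF : ∀ t, t ∈ F ↔ t ∈ near T R := fun t => by simp [hFdef]
  have hF' : ∀ t, t ∈ F' ↔ t ∈ near T (R - D) := fun t => by simp [hFdef']
  have hsub : F' ⊆ F := fun t ht =>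
    (hF t).2 (near_mono (by linarith [hT.diam_pos]) ((hF' t).1 ht))
  rw [Set.ncard_eq_toFinset_card _ (near_finite hT R),
    Set.ncard_eq_toFinset_card _ (near_finite hT (R - D))]
  have hFT : ∀ t ∈ F, IsPolygonTile n t := fun t ht => hT.poly t ((hF t).1 ht).1
  -- The vertex set of `t` as a finset, with a default value away from `F`.
  set V : Set Plane → Finset Plane := fun t =>
    if h : (Set.extremePoints ℝ t).Finite then h.toFinset else ∅ with hV
  have hVeq : ∀ t (ht : t ∈ F), V t = (hFT t ht).finite.toFinset := fun t ht => by
    rw [hV]; exact dif_pos (hFT t ht).finite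
  have hVmem : ∀ t ∈ F, ∀ v, v ∈ V t ↔ v ∈ Set.extremePoints ℝ t := fun t ht v => by
    rw [hVeq t ht, Set.Finite.mem_toFinset]
  have hVcard : ∀ t ∈ F, ((V t).card : ℝ) = n := fun t ht => by
    rw [hVeq t ht, ← Set.ncard_eq_toFinset_card _ (hFT t ht).finite, (hFT t ht).card]
  have hlow : (F.card : ℝ) * (((n : ℝ) - 2) * (turn / 2)) ≤ ∑ t ∈ F, ∑ v ∈ V t, ang t v := by
    rw [← nsmul_eq_mul]
    refine Finset.card_nsmul_le_sum _ _ _ fun t ht => ?_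
    rw [hVeq t ht]
    exact sum_ang_ge (hFT t ht)
  set w : Plane → ℝ := fun v => if ‖v‖ ≤ R then turn / 3 else turn / 2 with hw
  have hmid : ∑ t ∈ F, ∑ v ∈ V t, ang t v ≤ ∑ t ∈ F, ∑ v ∈ V t, w v := by
    have hswap : ∀ (x : Set Plane) (y : Plane), x ∈ F ∧ y ∈ V x ↔
        x ∈ F.filter (fun t => y ∈ V t) ∧ y ∈ F.biUnion V := by
      intro x y
      simp only [Finset.mem_filter, Finset.mem_biUnion]
      exact ⟨fun h => ⟨h, x, h⟩, fun h => h.1⟩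
    rw [Finset.sum_comm' hswap, Finset.sum_comm' hswap]
    refine Finset.sum_le_sum fun v _ => ?_
    by_cases hvR : ‖v‖ ≤ R
    · have h := sum_vertex_ang_le hT v (F.filter (fun t => v ∈ V t)) (by
        intro t
        rw [Finset.mem_filter]
        constructor
        · rintro ⟨h1, h2⟩
          exact ⟨((hF t).1 h1).1, (hVmem t h1 v).1 h2⟩
        · rintro ⟨h1, h2⟩
          have h3 : t ∈ F := (hF t).2 (mem_near_of_mem h1 h2.1 hvR)
          exact ⟨h3, (hVmem t h3 v).2 h2⟩)
      rw [Finset.sum_const, nsmul_eq_mul]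
      simpa only [hw, if_pos hvR] using h
    · refine Finset.sum_le_sum fun t ht => ?_
      rw [Finset.mem_filter] at ht
      simp only [hw, if_neg hvR]
      exact (ang_vertex_lt (hFT t ht.1) ((hVmem t ht.1 v).1 ht.2)).le
  have hin : ∑ t ∈ F', ∑ v ∈ V t, w v = F'.card * (n * (turn / 3)) := by
    rw [← nsmul_eq_mul, ← Finset.sum_const]
    refine Finset.sum_congr rfl fun t ht => ?_
    rw [← hVcard t (hsub ht), ← nsmul_eq_mul, ← Finset.sum_const]
    refine Finset.sum_congr rfl fun v hv => if_pos ?_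
    have hvt : v ∈ t := ((hVmem t (hsub ht) v).1 hv).1
    obtain ⟨htT, y, hyt, hyR⟩ := (hF' t).1 ht
    have := hT.dist_le t htT v hvt y hyt
    rw [mem_closedBall] at hyR
    rw [← dist_zero_right]
    linarith [dist_triangle v y 0]
  have hout : ∑ t ∈ F \ F', ∑ v ∈ V t, w v ≤ (F \ F').card * (n * (turn / 2)) := by
    rw [← nsmul_eq_mul]
    refine Finset.sum_le_card_nsmul _ _ _ fun t ht => ?_
    rw [← hVcard t (Finset.mem_sdiff.1 ht).1, ← nsmul_eq_mul]
    refine Finset.sum_le_card_nsmul _ _ _ fun v _ => ?_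
    simp only [hw]
    split_ifs <;> linarith
  have hcard : ((F \ F').card : ℝ) = F.card - F'.card := by
    rw [Finset.card_sdiff_of_subset hsub, Nat.cast_sub (Finset.card_le_card hsub)]
  rw [← Finset.sum_sdiff (f := fun t => ∑ v ∈ V t, w v) hsub, hin] at hmid
  rw [hcard] at hout
  have hn' : (7 : ℝ) ≤ n := by exact_mod_cast hn
  have hchain : (F.card : ℝ) * (((n : ℝ) - 2) * (turn / 2)) ≤
      (F.card - F'.card) * (n * (turn / 2)) + F'.card * (n * (turn / 3)) := by linarith
  have hdiv : (n : ℝ) * F'.card * (turn / 6) ≤ 6 * F.card * (turn / 6) := by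
    linarith
  have h6 : (n : ℝ) * F'.card ≤ 6 * F.card := le_of_mul_le_mul_right hdiv (by positivity)
  have hFn : (0 : ℝ) ≤ F.card := Nat.cast_nonneg _
  nlinarith

theorem no_tiling (hn : 7 ≤ n) (hT : IsPolygonTiling n A D T) : False := by
  have hn' : (7 : ℝ) ≤ n := by exact_mod_cast hn
  have hA := hT.area_pos
  have hD := hT.diam_pos
  set q : ℝ := n / (n - 1) with hq
  have hq1 : 1 < q := by rw [hq, lt_div_iff₀ (by linarith)]; linarith
  -- The number of tiles near the disc of radius `k D` grows exponentially in `k`.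
  have hexp : ∀ k : ℕ, q ^ k ≤ (near T (k * D)).ncard := by
    intro k
    induction k with
    | zero =>
      have h0 : (0 : Plane) ∈ ⋃₀ T := by rw [hT.cover]; trivial
      obtain ⟨t, ht, h0t⟩ := h0
      have hne : (near T (((0 : ℕ) : ℝ) * D)).Nonempty :=
        ⟨t, mem_near_of_mem ht h0t (by simp)⟩
      have := (Set.ncard_pos (near_finite hT _)).2 hne
      rw [pow_zero]
      exact_mod_cast this
    | succ k ih =>
      have h := growth hn hT (((k + 1 : ℕ) : ℝ) * D)
      have he : ((k + 1 : ℕ) : ℝ) * D - D = k * D := by push_cast; ring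
      rw [he] at h
      calc q ^ (k + 1) = q * q ^ k := pow_succ' q k
        _ ≤ q * (near T (k * D)).ncard := by gcongr
        _ ≤ (near T (((k + 1 : ℕ) : ℝ) * D)).ncard := by
          rw [hq, div_mul_eq_mul_div, div_le_iff₀ (by linarith), mul_comm _ ((n : ℝ) - 1)]
          exact h
  -- By area, it is bounded by a quadratic polynomial in `k`.
  set K : ℝ := D ^ 2 * volume.real (ball (0 : Plane) 1) / A with hK
  have hquad : ∀ k : ℕ, ((near T (k * D)).ncard : ℝ) ≤ ((k + 1 : ℕ) : ℝ) ^ 2 * K := by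
    intro k
    have h := card_mul_area_le hT (near_finite hT (k * D)).toFinset (R := k * D) (by simp)
    rw [← Set.ncard_eq_toFinset_card _ (near_finite hT (k * D)),
      Measure.addHaar_real_closedBall _ _ (by positivity)] at h
    have hfr : Module.finrank ℝ Plane = 2 := by simp
    rw [hfr] at h
    rw [hK, ← mul_div_assoc, le_div_iff₀ hA]
    calc _ ≤ _ := h
      _ = _ := by push_cast; ring
  have hlim := (tendsto_pow_const_div_const_pow_of_one_lt 2 hq1).mul_const (q * K)
  rw [zero_mul] at hlim
  have hev := (hlim.comp (Filter.tendsto_add_atTop_nat 1)).eventually (gt_mem_nhds one_pos)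
  obtain ⟨k, hk⟩ := hev.exists
  have hqk : 0 < q ^ k := by positivity
  have h1 := (hexp k).trans (hquad k)
  simp only [Function.comp_apply] at hk
  rw [pow_succ q k] at hk
  have h2 : ((k + 1 : ℕ) : ℝ) ^ 2 / (q ^ k * q) * (q * K) = ((k + 1 : ℕ) : ℝ) ^ 2 * K / q ^ k := by
    have : q ≠ 0 := by positivity
    field_simp
  rw [h2, div_lt_one hqk] at hk
  linarith

end Tiling

/-! ### Congruent tiles -/

theorem extremePoints_image (f : Plane ≃ᵃⁱ[ℝ] Plane) (P : Set Plane) :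
    Set.extremePoints ℝ (f '' P) = f '' Set.extremePoints ℝ P := by
  have hseg : ∀ x y z : Plane, f z ∈ openSegment ℝ (f x) (f y) ↔ z ∈ openSegment ℝ x y := by
    intro x y z
    have h := image_openSegment ℝ f.toAffineEquiv.toAffineMap x y
    have h' : f '' openSegment ℝ x y = openSegment ℝ (f x) (f y) := h
    rw [← h', f.injective.mem_set_image]
  ext y
  obtain ⟨x, rfl⟩ := f.surjective y
  rw [f.injective.mem_set_image, mem_extremePoints_iff_left, mem_extremePoints_iff_left,
    f.injective.mem_set_image]
  simp only [Set.forall_mem_image, hseg, f.injective.eq_iff]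

theorem isPolygonTile_image {n : ℕ} {P : Set Plane} (hP : IsPolygonTile n P)
    (f : Plane ≃ᵃⁱ[ℝ] Plane) : IsPolygonTile n (f '' P) where
  compact := hP.compact.image f.continuous
  convex := hP.convex.affine_image f.toAffineEquiv.toAffineMap
  interior_nonempty := by
    have := f.toHomeomorph.image_interior P
    have h' : f '' interior P = interior (f '' P) := this
    rw [← h']
    exact hP.interior_nonempty.image f
  finite := by rw [extremePoints_image]; exact hP.finite.image f
  card := by rw [extremePoints_image, Set.ncard_image_of_injective _ f.injective, hP.card]

theorem volume_image (f : Plane ≃ᵃⁱ[ℝ] Plane) (P : Set Plane) :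
    volume (f '' P) = volume P := by
  have hf : (f : Plane → Plane) = fun x => f 0 + f.linearIsometryEquiv x := by
    ext1 x
    have := f.map_vadd 0 x
    simpa [add_comm] using this
  have h1 : f '' P = (fun x => f 0 + x) '' (f.linearIsometryEquiv '' P) := by
    rw [Set.image_image]
    exact congrArg (· '' P) hf
  rw [h1, Set.image_add_left, measure_preimage_add]
  rw [LinearIsometryEquiv.image_eq_preimage_symm]
  exact f.linearIsometryEquiv.symm.measurePreserving.measure_preimage_equiv
    (f := f.linearIsometryEquiv.symm.toMeasurableEquiv) P

/-- No convex polygon with seven or more vertices admits a monohedral tiling of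
the plane. -/
theorem no_convexPolygon_with_seven_or_more_vertices_tiles
    (P : Set Plane) (hcomp : IsCompact P) (hconv : Convex ℝ P)
    (hint : (interior P).Nonempty) (hfin : (Set.extremePoints ℝ P).Finite)
    (hn : 7 ≤ (Set.extremePoints ℝ P).ncard) :
    ¬ ∃ T : Set (Set Plane), IsMonohedralTiling P T := by
  rintro ⟨T, htile, hcover, hdisj⟩
  have hP : IsPolygonTile (Set.extremePoints ℝ P).ncard P := ⟨hcomp, hconv, hint, hfin, rfl⟩
  have hcongr : ∀ t ∈ T, ∃ f : Plane ≃ᵃⁱ[ℝ] Plane, t = f '' P := by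
    intro t ht
    obtain ⟨f, hf⟩ := htile t ht
    exact ⟨f.toRealAffineIsometryEquiv, by simpa using hf⟩
  obtain ⟨D, hD⟩ := Metric.isBounded_iff.1 hcomp.isBounded
  refine no_tiling (A := volume.real P) (D := max D 1) hn ⟨?_, hcover, hdisj, ?_, ?_, ?_, ?_⟩
  · intro t ht
    obtain ⟨f, rfl⟩ := hcongr t ht
    exact isPolygonTile_image hP f
  · intro t ht
    obtain ⟨f, rfl⟩ := hcongr t ht
    rw [measureReal_def, measureReal_def, volume_image]
  · intro t ht
    obtain ⟨f, rfl⟩ := hcongr t ht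
    rintro _ ⟨x, hx, rfl⟩ _ ⟨y, hy, rfl⟩
    rw [f.dist_map]
    exact (hD hx hy).trans (le_max_left _ _)
  · exact ENNReal.toReal_pos (Measure.measure_pos_of_nonempty_interior volume hint).ne'
      hcomp.measure_ne_top
  · exact lt_of_lt_of_le one_pos (le_max_right _ _)
end
end
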